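/- arXiv:2405.04998 — 8 statements merged into one kernel-verified Lean document; each statement's English description precedes it below -/
import Mathlib

section
/- Soundness of the proof system for exclusion atoms: if Σ is a set of exclusion atoms and Σ ⊢ x|y (x|y is derivable from Σ by the rules E1–E6), then Σ ⊨ x|y (every team satisfying all atoms of Σ satisfies x|y). -/
/-!
The proof fixes a team satisfying `Γ` and inducts on the derivation. For each rule, a pair of
assignments violating the conclusion yields a pair violating the premise: an equation between
concatenated tuples splits into equations between their blocks (`List.append_inj`,
`List.append_inj'`), using the length side conditions. No length condition on the members of
`Γ` is needed: cancelling blocks of equal length is sound even for atoms whose sides differ in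
length, which every team satisfies.
-/


/-- A team over variables `V` and values `M` is a finite set of assignments.
`exclSat T x y` says that the team `T` satisfies the exclusion atom `x|y`:
for all `s₁, s₂ ∈ T`, `s₁(x) ≠ s₂(y)`. -/
def exclSat {V M : Type*} (T : Finset (V → M)) (x y : List V) : Prop :=
  ∀ s₁ ∈ T, ∀ s₂ ∈ T, x.map s₁ ≠ y.map s₂

/-- Derivability of exclusion atoms from a set `Γ` of exclusion atoms by the
rules E1–E6 (juxtaposition of tuples is list concatenation). -/
inductive ExclDeriv {V : Type*} (Γ : Set (List V × List V)) : List V → List V → Prop where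
  | ax {x y : List V} : (x, y) ∈ Γ → ExclDeriv Γ x y
  | e1 {x y z : List V} : ExclDeriv Γ x x → y.length = z.length → ExclDeriv Γ y z
  | e2 {x y : List V} : ExclDeriv Γ x y → ExclDeriv Γ y x
  | e3 {x y u v : List V} : ExclDeriv Γ x y → u.length = v.length →
      ExclDeriv Γ (x ++ u) (y ++ v)
  | e4 {x y u v : List V} : x.length = y.length → u.length = v.length →
      ExclDeriv Γ (x ++ u ++ u) (y ++ v ++ v) → ExclDeriv Γ (x ++ u) (y ++ v)
  | e5 {x y z u v w : List V} : x.length = u.length → y.length = v.length →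
      ExclDeriv Γ (x ++ y ++ z) (u ++ v ++ w) → ExclDeriv Γ (x ++ z ++ y) (u ++ w ++ v)
  | e6 {x y w z : List V} : x.length = y.length →
      ExclDeriv Γ (x ++ w) (y ++ w) → ExclDeriv Γ (z ++ z) (x ++ y)

/-- Soundness of the proof system E1–E6 for exclusion atoms. -/
theorem exclusion_soundness {V : Type*} (Γ : Set (List V × List V)) (x y : List V)
    (h : ExclDeriv Γ x y) :
    ∀ (M : Type*) (T : Finset (V → M)),
      (∀ a ∈ Γ, exclSat T a.1 a.2) → exclSat T x y := by
  intro M T hT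
  induction h with
  | ax h => exact hT _ h
  | e1 _ _ ih =>
    -- An assignment always agrees with itself on `x`, so `x|x` forces the team to be empty.
    exact fun s hs _ _ _ => ih s hs s hs rfl
  | e2 _ ih => exact fun s hs t ht heq => ih t ht s hs heq.symm
  | e3 _ hl ih =>
    intro s hs t ht heq
    simp only [List.map_append] at heq
    exact ih s hs t ht (List.append_inj' heq (by simpa using hl)).1
  | e4 _ hu _ ih =>
    intro s hs t ht heq
    simp only [List.map_append] at heq
    obtain ⟨h₁, h₂⟩ := List.append_inj' heq (by simpa using hu)
    exact ih s hs t ht (by simp only [List.map_append, h₁, h₂])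
  | e5 hx hy _ ih =>
    intro s hs t ht heq
    simp only [List.map_append] at heq
    obtain ⟨h₁, h₂⟩ := List.append_inj' heq (by simpa using hy)
    obtain ⟨h₃, h₄⟩ := List.append_inj h₁ (by simpa using hx)
    exact ih s hs t ht (by simp only [List.map_append, h₂, h₃, h₄])
  | e6 hl _ ih =>
    intro s _ t ht heq
    have hlen := congrArg List.length heq
    simp only [List.map_append, List.length_append, List.length_map] at heq hlen
    obtain ⟨h₁, h₂⟩ := List.append_inj heq (by simp only [List.length_map]; omega)
    -- `s(z) = t(x)` and `s(z) = t(y)`, so the single assignment `t` violates `xw|yw`.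
    exact ih t ht t ht (by simp only [List.map_append, ← h₁, ← h₂])
end

section
/- Soundness of rule E6: for tuples of variables x, y, w, z with |x| = |y| and any team T, if T ⊨ xw|yw (where xw, yw denote concatenations of tuples), then T ⊨ zz|xy (where zz and xy denote concatenations). -/
/-- Soundness of rule E6: if `T ⊨ xw|yw` (with `|x| = |y|`),
then `T ⊨ zz|xy`. -/
theorem e6_sound {V M : Type*} (T : Finset (V → M)) (x y w z : List V)
    (hlen : x.length = y.length) (h : exclSat T (x ++ w) (y ++ w)) :
    exclSat T (z ++ z) (x ++ y) := by
  intro s₁ _ s₂ hs₂ he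
  rw [List.map_append, List.map_append] at he
  -- Comparing lengths gives `2|z| = |x| + |y| = 2|x|`, so the two concatenations split alike.
  have hl : (z.map s₁).length = (x.map s₂).length := by
    have := congrArg List.length he
    simp only [List.length_append, List.length_map] at this ⊢
    omega
  obtain ⟨hx, hy⟩ := List.append_inj he hl
  -- `s₂(x) = s₁(z) = s₂(y)`, so the single assignment `s₂` violates `xw|yw`.
  apply h s₂ hs₂ s₂ hs₂
  rw [List.map_append, List.map_append, ← hx, ← hy]
end

section
/- Let u|v and x|y be exclusion atoms with |x| = |y| = n. Then x|y is derivable from u|v using only the rules E3, E4 and E5 if and only if S(u|v) ⊆ S(x|y). -/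
/-! Soundness is an invariant of derivations: both sides of the atom keep equal lengths, and no pair of
`u.zip v` is ever lost, since E3 only adds pairs, E4 only deletes a repeated block and E5 permutes.

For completeness, regard an atom as the list `l` of its pairs. E5 exchanges two final blocks, and
two such exchanges transpose adjacent entries at any position, so derivability is
invariant under permutations of `l` (`DerivPairs.of_perm`). Given `S(u|v) ⊆ S(x|y)`, E3 derives the
concatenation of `u|v` and `x|y`; every pair of `u|v` also occurs in `x|y`, so after a permutation
it can be contracted away by E4 (`DerivPairs.absorb`), which leaves `x|y`.
-/

/-- The set representation `S(x|y) = {⟨(x)_i, (y)_i⟩ : 1 ≤ i ≤ n}` of an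
exclusion atom `x|y`. -/
def SRep {V : Type*} (x y : List V) : Set (V × V) := {q | q ∈ x.zip y}

/-- Derivability from the single exclusion atom `u|v` using only the rules
E3, E4 and E5 (the base case is the premise `u|v` itself). -/
inductive Deriv345 {V : Type*} (u v : List V) : List V → List V → Prop where
  | base : Deriv345 u v u v
  | e3 {x y a b : List V} : Deriv345 u v x y → a.length = b.length →
      Deriv345 u v (x ++ a) (y ++ b)
  | e4 {x y a b : List V} : x.length = y.length → a.length = b.length →
      Deriv345 u v (x ++ a ++ a) (y ++ b ++ b) → Deriv345 u v (x ++ a) (y ++ b)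
  | e5 {x y z a b c : List V} : x.length = a.length → y.length = b.length →
      Deriv345 u v (x ++ y ++ z) (a ++ b ++ c) → Deriv345 u v (x ++ z ++ y) (a ++ c ++ b)

theorem Deriv345.sound {V : Type*} {u v x y : List V} (huv : u.length = v.length)
    (h : Deriv345 u v x y) : x.length = y.length ∧ u.zip v ⊆ x.zip y := by
  induction h with
  | base => exact ⟨huv, List.Subset.refl _⟩
  | e3 _ hab ih =>
    refine ⟨by simp [ih.1, hab], ?_⟩
    rw [List.zip_append ih.1]
    exact List.subset_append_of_subset_left _ ih.2
  | e4 hxy hab _ ih =>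
    refine ⟨by simp [hxy, hab], fun q hq => ?_⟩
    have := ih.2 hq
    rw [List.zip_append (by simp [hxy, hab]), List.zip_append hxy] at this
    rw [List.zip_append hxy]
    simp only [List.mem_append] at this ⊢
    tauto
  | e5 hxa hyb _ ih =>
    have hzc := ih.1
    simp only [List.length_append, hxa, hyb, Nat.add_left_cancel_iff] at hzc
    refine ⟨by simp [hxa, hyb, hzc], fun q hq => ?_⟩
    have := ih.2 hq
    rw [List.zip_append (by simp [hxa, hyb]), List.zip_append hxa] at this
    rw [List.zip_append (by simp [hxa, hzc]), List.zip_append hxa]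
    simp only [List.mem_append] at this ⊢
    tauto

/-- Derivability of the atom whose list of pairs is `l`. -/
def DerivPairs {V : Type*} (u v : List V) (l : List (V × V)) : Prop :=
  Deriv345 u v (l.map Prod.fst) (l.map Prod.snd)

theorem DerivPairs.weaken {V : Type*} {u v : List V} {l : List (V × V)}
    (h : DerivPairs u v l) (m : List (V × V)) : DerivPairs u v (l ++ m) := by
  unfold DerivPairs at *
  simp only [List.map_append]
  exact h.e3 (by simp)

theorem DerivPairs.contract {V : Type*} {u v : List V} {l m : List (V × V)}
    (h : DerivPairs u v (l ++ m ++ m)) : DerivPairs u v (l ++ m) := by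
  unfold DerivPairs at *
  simp only [List.map_append] at *
  exact Deriv345.e4 (by simp) (by simp) h

theorem DerivPairs.exchange {V : Type*} {u v : List V} {l m k : List (V × V)}
    (h : DerivPairs u v (l ++ m ++ k)) : DerivPairs u v (l ++ k ++ m) := by
  unfold DerivPairs at *
  simp only [List.map_append] at *
  exact Deriv345.e5 (by simp) (by simp) h

/-- The fixed prefix `p` makes the induction on permutations go through under `List.cons`. -/
theorem DerivPairs.of_perm_append {V : Type*} {u v : List V} {l m : List (V × V)}
    (hlm : l.Perm m) : ∀ p, DerivPairs u v (p ++ l) → DerivPairs u v (p ++ m) := by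
  induction hlm with
  | nil => exact fun p h => h
  | cons a _ ih =>
    intro p h
    simpa using ih (p ++ [a]) (by simpa using h)
  | swap a b l =>
    intro p h
    have h₁ : DerivPairs u v (p ++ (a :: l) ++ [b]) :=
      DerivPairs.exchange (by simpa using h)
    have h₂ : DerivPairs u v (p ++ [a] ++ [b] ++ l) :=
      DerivPairs.exchange (by simpa using h₁)
    simpa using h₂
  | trans _ _ ih₁ ih₂ => exact fun p h => ih₂ p (ih₁ p h)

theorem DerivPairs.of_perm {V : Type*} {u v : List V} {l m : List (V × V)}
    (h : DerivPairs u v l) (hlm : l.Perm m) : DerivPairs u v m :=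
  DerivPairs.of_perm_append hlm [] h

/-- Pairs that already occur in `m` can be removed by repeated contraction. -/
theorem DerivPairs.absorb {V : Type*} {u v : List V} {m : List (V × V)} :
    ∀ w : List (V × V), w ⊆ m → DerivPairs u v (w ++ m) → DerivPairs u v m
  | [], _, h => h
  | a :: w, hw, h => by
    obtain ⟨s, t, rfl⟩ := List.append_of_mem (hw List.mem_cons_self)
    refine DerivPairs.absorb w (List.subset_of_cons_subset hw) ?_
    have h₁ : DerivPairs u v ((w ++ s ++ t) ++ [a] ++ [a]) := by
      refine h.of_perm ?_
      classical
      rw [List.perm_iff_count]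
      intro b
      simp only [List.count_append, List.count_cons, List.count_nil]
      omega
    refine h₁.contract.of_perm ?_
    classical
    rw [List.perm_iff_count]
    intro b
    simp only [List.count_append, List.count_cons, List.count_nil]
    omega

/-- `x|y` is derivable from `u|v` using only rules E3, E4, E5
iff `S(u|v) ⊆ S(x|y)`. -/
theorem deriv345_iff_srep_subset {V : Type*} (u v x y : List V) (n : ℕ)
    (huv : u.length = v.length) (hx : x.length = n) (hy : y.length = n) :
    Deriv345 u v x y ↔ SRep u v ⊆ SRep x y := by
  refine ⟨fun h q hq => (h.sound huv).2 hq, fun h => ?_⟩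
  have hxy : x.length = y.length := hx.trans hy.symm
  have h₀ : DerivPairs u v (u.zip v) := by
    unfold DerivPairs
    rw [List.map_fst_zip huv.le, List.map_snd_zip huv.ge]
    exact Deriv345.base
  have h₁ : DerivPairs u v (x.zip y) :=
    DerivPairs.absorb (u.zip v) (fun q hq => h hq) (h₀.weaken _)
  unfold DerivPairs at h₁
  rwa [List.map_fst_zip hxy.le, List.map_snd_zip hxy.ge] at h₁
end

section
/- If two exclusion atoms u|v and x|y have the same set representation, S(u|v) = S(x|y), then they are semantically equivalent: for every team T, T ⊨ u|v if and only if T ⊨ x|y. -/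
/-- For tuples of equal length, equality of the value tuples is a condition on the set of
pairs of corresponding entries alone; order and multiplicity of the pairs play no part. -/
theorem map_eq_map_iff_forall_mem_SRep {V M : Type*} (s t : V → M) (x y : List V)
    (hxy : x.length = y.length) :
    x.map s = y.map t ↔ ∀ q ∈ SRep x y, s q.1 = t q.2 := by
  induction x generalizing y with
  | nil =>
    cases y with
    | nil => simp [SRep]
    | cons b y => simp at hxy
  | cons a x ih =>
    cases y with
    | nil => simp at hxy
    | cons b y =>
      have h := ih y (by simpa using hxy)
      simp only [SRep, Set.mem_ofPred_eq] at h
      simp only [SRep, Set.mem_ofPred_eq, List.map_cons, List.cons.injEq, List.zip_cons_cons,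
        List.forall_mem_cons, h]

/-- Exclusion atoms with the same set representation are
semantically equivalent. -/
theorem srep_eq_sem_equiv {V M : Type*} (u v x y : List V)
    (huv : u.length = v.length) (hxy : x.length = y.length)
    (h : SRep u v = SRep x y) (T : Finset (V → M)) :
    exclSat T u v ↔ exclSat T x y := by
  simp only [exclSat, ne_eq, map_eq_map_iff_forall_mem_SRep _ _ u v huv,
    map_eq_map_iff_forall_mem_SRep _ _ x y hxy, h]
end

section
/- Decidability of the implication problem for exclusion atoms: over a countable set of variables with decidable equality, the relation 'Σ ⊢ x|y', where Σ ranges over finite sets of exclusion atoms and x|y over exclusion atoms, is decidable. -/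
namespace ExclDecide

variable {V : Type*}

/-! ### Tuples of pairs -/

/-- The set of pairs `L`, given as a list, is derivable as an exclusion atom. -/
def Der (Γ : Set (List V × List V)) (L : List (V × V)) : Prop :=
  ExclDeriv Γ (L.map Prod.fst) (L.map Prod.snd)

theorem Der.append {Γ : Set (List V × List V)} {L : List (V × V)} (h : Der Γ L)
    (M : List (V × V)) : Der Γ (L ++ M) := by
  unfold Der at *
  rw [List.map_append, List.map_append]
  exact h.e3 (by simp)

theorem Der.exchange {Γ : Set (List V × List V)} {A B C : List (V × V)}
    (h : Der Γ (A ++ B ++ C)) : Der Γ (A ++ C ++ B) := by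
  unfold Der at *
  simp only [List.map_append] at *
  exact h.e5 (by simp) (by simp)

theorem Der.contract {Γ : Set (List V × List V)} {A B : List (V × V)}
    (h : Der Γ (A ++ B ++ B)) : Der Γ (A ++ B) := by
  unfold Der at *
  simp only [List.map_append] at *
  exact h.e4 (by simp) (by simp)

/-- Permutations of a suffix; the prefix `P` makes the induction on `List.Perm` go through. -/
theorem Der.perm_suffix {Γ : Set (List V × List V)} {L M : List (V × V)} (hp : L.Perm M) :
    ∀ P : List (V × V), Der Γ (P ++ L) → Der Γ (P ++ M) := by
  induction hp with
  | nil => exact fun _ h => h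
  | cons a _ ih =>
    intro P h
    simpa using ih (P ++ [a]) (by simpa using h)
  | swap a b l =>
    intro P h
    have h1 : Der Γ (P ++ [b] ++ (a :: l)) := by simpa using h
    have h2 : Der Γ ((P ++ [a]) ++ l ++ [b]) := by simpa using h1.exchange
    simpa using h2.exchange
  | trans _ _ ih1 ih2 => exact fun P h => ih2 P (ih1 P h)

theorem Der.perm {Γ : Set (List V × List V)} {L M : List (V × V)} (h : Der Γ L)
    (hp : L.Perm M) : Der Γ M :=
  Der.perm_suffix hp [] h

theorem Der.absorb {Γ : Set (List V × List V)} (M : List (V × V)) :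
    ∀ L : List (V × V), L ⊆ M → Der Γ (L ++ M) → Der Γ M
  | [], _, h => h
  | a :: L, hs, h => by
    classical
    refine Der.absorb M L (fun b hb => hs (List.mem_cons_of_mem _ hb)) ?_
    have ha : a ∈ M := hs (by simp)
    have hM : M.Perm (M.erase a ++ [a]) :=
      (List.perm_cons_erase ha).trans (List.perm_append_singleton a _).symm
    have h1 : (a :: L ++ M).Perm (L ++ M.erase a ++ [a] ++ [a]) := by
      refine ((List.Perm.append_left (a :: L) hM).trans ?_)
      have := (List.perm_append_singleton a (L ++ (M.erase a ++ [a]))).symm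
      simpa using this
    have h2 : Der Γ (L ++ M.erase a ++ [a]) := (h.perm h1).contract
    refine h2.perm ?_
    rw [List.append_assoc]
    exact List.Perm.append_left L hM.symm

theorem Der.mono {Γ : Set (List V × List V)} {L M : List (V × V)} (h : Der Γ L)
    (hs : L ⊆ M) : Der Γ M :=
  Der.absorb M L hs (h.append M)

theorem Der.swap {Γ : Set (List V × List V)} {L : List (V × V)} (h : Der Γ L) :
    Der Γ (L.map Prod.swap) := by
  unfold Der at *
  simpa [Function.comp_def] using h.e2

/-- E6 on sets of pairs: diagonal pairs are dropped, any other pair `p` is replaced by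
`(z p, p.1)` and `(z p, p.2)`. -/
theorem Der.split {Γ : Set (List V × List V)} {L M : List (V × V)} (h : Der Γ L)
    (z : V × V → V)
    (hz : ∀ p ∈ L, p.1 ≠ p.2 → (z p, p.1) ∈ M ∧ (z p, p.2) ∈ M) : Der Γ M := by
  classical
  set P := L.filter (fun p => p.1 ≠ p.2) with hP
  set D := L.filter (fun p => ! decide (p.1 ≠ p.2)) with hD
  have hPD : Der Γ (P ++ D) :=
    h.perm (List.filter_append_perm (fun p : V × V => decide (p.1 ≠ p.2)) L).symm
  have hdiag : D.map Prod.snd = D.map Prod.fst := by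
    apply List.map_congr_left
    intro p hp
    simp [hD] at hp
    exact hp.2.symm
  have h6 : ExclDeriv Γ (P.map z ++ P.map z) (P.map Prod.fst ++ P.map Prod.snd) := by
    unfold Der at hPD
    rw [List.map_append, List.map_append, hdiag] at hPD
    exact hPD.e6 (by simp)
  have h7 : Der Γ (P.map (fun p => (z p, p.1)) ++ P.map (fun p => (z p, p.2))) := by
    unfold Der
    simpa [Function.comp_def] using h6
  refine h7.mono ?_
  intro q hq
  simp only [List.mem_append, List.mem_map, hP, List.mem_filter] at hq
  rcases hq with ⟨p, ⟨hp, hne⟩, rfl⟩ | ⟨p, ⟨hp, hne⟩, rfl⟩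
  · exact (hz p hp (by simpa using hne)).1
  · exact (hz p hp (by simpa using hne)).2

/-! ### Linked variables and completeness -/

/-- `x` and `y`, as right vertices of the bipartite graph `G`, have a common left neighbour. -/
def Adj (G : List (V × V)) (x y : V) : Prop := ∃ a, (a, x) ∈ G ∧ (a, y) ∈ G

/-- The right copies of `x` and `y` lie in one connected component of the bipartite
graph `G`, or `x = y`. -/
def Linked (G : List (V × V)) : V → V → Prop := Relation.EqvGen (Adj G)

/-- `x` and `y` are joined by a path of right vertices of length at most `2 ^ n`, written as
`n` successive bisections. -/
def Bisect (G : List (V × V)) : ℕ → V → V → Prop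
  | 0, x, y => x = y ∨ Adj G x y
  | n + 1, x, y => ∃ z, Bisect G n z x ∧ Bisect G n z y

theorem Bisect.refl (G : List (V × V)) (n : ℕ) (x : V) : Bisect G n x x := by
  induction n with
  | zero => exact Or.inl rfl
  | succ n ih => exact ⟨x, ih, ih⟩

theorem Bisect.symm {G : List (V × V)} {n : ℕ} {x y : V} (h : Bisect G n x y) :
    Bisect G n y x := by
  cases n with
  | zero =>
    rcases h with h | ⟨a, h1, h2⟩
    · exact Or.inl h.symm
    · exact Or.inr ⟨a, h2, h1⟩
  | succ n =>
    obtain ⟨z, h1, h2⟩ := h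
    exact ⟨z, h2, h1⟩

theorem Bisect.mono {G : List (V × V)} {n m : ℕ} (hnm : n ≤ m) {x y : V}
    (h : Bisect G n x y) : Bisect G m x y := by
  induction hnm with
  | refl => exact h
  | step _ ih => exact ⟨x, Bisect.refl G _ x, ih⟩

theorem Linked.exists_bisect {G : List (V × V)} {x y : V} (h : Linked G x y) :
    ∃ n, Bisect G n x y := by
  induction h with
  | rel x y h => exact ⟨0, Or.inr h⟩
  | refl x => exact ⟨0, Bisect.refl G 0 x⟩
  | symm x y _ ih => exact ih.imp fun _ h => h.symm
  | trans x y z _ _ ih1 ih2 =>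
    obtain ⟨n, h1⟩ := ih1
    obtain ⟨m, h2⟩ := ih2
    exact ⟨max n m + 1, y, (h1.mono (le_max_left n m)).symm, h2.mono (le_max_right n m)⟩

theorem exists_bisect_forall {G : List (V × V)} (L : List (V × V))
    (h : ∀ p ∈ L, Linked G p.1 p.2) : ∃ n, ∀ p ∈ L, Bisect G n p.1 p.2 := by
  induction L with
  | nil => exact ⟨0, by simp⟩
  | cons a L ih =>
    obtain ⟨n, hn⟩ := ih fun p hp => h p (List.mem_cons_of_mem _ hp)
    obtain ⟨m, hm⟩ := (h a (by simp)).exists_bisect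
    refine ⟨max n m, fun p hp => ?_⟩
    rcases List.mem_cons.1 hp with rfl | hp
    · exact hm.mono (le_max_right n m)
    · exact (hn p hp).mono (le_max_left n m)

theorem Der.of_bisect {Γ : Set (List V × List V)} {G : List (V × V)} (n : ℕ) :
    ∀ L : List (V × V), Der Γ L → (∀ p ∈ L, Bisect G n p.1 p.2) → Der Γ G := by
  induction n with
  | zero =>
    intro L hL h
    have hc : ∀ p : V × V, ∃ a, p ∈ L → p.1 ≠ p.2 → (a, p.1) ∈ G ∧ (a, p.2) ∈ G := by
      intro p
      by_cases hp : p ∈ L ∧ p.1 ≠ p.2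
      · rcases h p hp.1 with he | ⟨a, ha⟩
        · exact absurd he hp.2
        · exact ⟨a, fun _ _ => ha⟩
      · exact ⟨p.1, fun h1 h2 => absurd ⟨h1, h2⟩ hp⟩
    choose z hz using hc
    exact hL.split z hz
  | succ n ih =>
    intro L hL h
    have hc : ∀ p : V × V, ∃ a, p ∈ L → Bisect G n a p.1 ∧ Bisect G n a p.2 := by
      intro p
      by_cases hp : p ∈ L
      · obtain ⟨a, ha⟩ := h p hp
        exact ⟨a, fun _ => ha⟩
      · exact ⟨p.1, fun h1 => absurd h1 hp⟩
    choose z hz using hc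
    refine ih (L.map (fun p => (z p, p.1)) ++ L.map (fun p => (z p, p.2))) ?_ ?_
    · refine hL.split z fun p hp _ => ⟨?_, ?_⟩
      · exact List.mem_append_left _ (List.mem_map.2 ⟨p, hp, rfl⟩)
      · exact List.mem_append_right _ (List.mem_map.2 ⟨p, hp, rfl⟩)
    · intro q hq
      rcases List.mem_append.1 hq with hq | hq
      · obtain ⟨p, hp, rfl⟩ := List.mem_map.1 hq
        exact (hz p hp).1
      · obtain ⟨p, hp, rfl⟩ := List.mem_map.1 hq
        exact (hz p hp).2

/-! ### The combinatorial characterization -/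

/-- One-sided criterion for deriving `G` from `S`: inclusion, or all pairs of `S` linked by `G`. -/
def Covers (G S : List (V × V)) : Prop := (∀ p ∈ S, p ∈ G) ∨ ∀ p ∈ S, Linked G p.1 p.2

/-- The criterion for deriving `G`: some atom of `Γ` is covered by `G` or by its swap. -/
def Cert (Γ : Set (List V × List V)) (G : List (V × V)) : Prop :=
  ∃ a ∈ Γ, Covers G (a.1.zip a.2) ∨ Covers (G.map Prod.swap) (a.1.zip a.2)

theorem Linked.map {G H : List (V × V)} (h : ∀ a x, (a, x) ∈ G → ∀ y, (a, y) ∈ G → Linked H x y)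
    {x y : V} (hxy : Linked G x y) : Linked H x y := by
  induction hxy with
  | rel x y hr =>
    obtain ⟨a, h1, h2⟩ := hr
    exact h a x h1 y h2
  | refl x => exact .refl x
  | symm x y _ ih => exact .symm _ _ ih
  | trans x y z _ _ ih1 ih2 => exact .trans _ _ _ ih1 ih2

theorem Linked.mono {G H : List (V × V)} (hs : G ⊆ H) {x y : V} (h : Linked G x y) :
    Linked H x y :=
  h.map fun a _ h1 _ h2 => .rel _ _ ⟨a, hs h1, hs h2⟩

theorem Covers.mono {G H S : List (V × V)} (hs : G ⊆ H) (h : Covers G S) : Covers H S :=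
  h.imp (fun h p hp => hs (h p hp)) (fun h p hp => (h p hp).mono hs)

theorem Cert.mono {Γ : Set (List V × List V)} {G H : List (V × V)} (hs : G ⊆ H)
    (h : Cert Γ G) : Cert Γ H := by
  obtain ⟨a, ha, h⟩ := h
  exact ⟨a, ha, h.imp (Covers.mono hs) (Covers.mono (List.map_subset _ hs))⟩

theorem Cert.swap {Γ : Set (List V × List V)} {G : List (V × V)} (h : Cert Γ G) :
    Cert Γ (G.map Prod.swap) := by
  obtain ⟨a, ha, h⟩ := h
  refine ⟨a, ha, h.symm.imp id ?_⟩
  simp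

/-- A diagonal set links only equal variables, so what it covers is diagonal. -/
theorem Covers.diag {G S : List (V × V)} (hG : ∀ p ∈ G, p.1 = p.2) (h : Covers G S) :
    ∀ p ∈ S, p.1 = p.2 := by
  intro p hp
  rcases h with h | h
  · exact hG p (h p hp)
  · have key : ∀ x y, Linked G x y → x = y := by
      intro x y hxy
      induction hxy with
      | rel x y hr =>
        obtain ⟨a, h1, h2⟩ := hr
        exact (hG _ h1).symm.trans (hG _ h2)
      | refl x => rfl
      | symm x y _ ih => exact ih.symm
      | trans x y z _ _ ih1 ih2 => exact ih1.trans ih2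
    exact key _ _ (h p hp)

theorem Cert.of_diag {Γ : Set (List V × List V)} {G : List (V × V)}
    (hG : ∀ p ∈ G, p.1 = p.2) (h : Cert Γ G) (H : List (V × V)) : Cert Γ H := by
  obtain ⟨a, ha, h⟩ := h
  have hd : ∀ p ∈ a.1.zip a.2, p.1 = p.2 := by
    rcases h with h | h
    · exact h.diag hG
    · refine h.diag fun p hp => ?_
      obtain ⟨q, hq, rfl⟩ := List.mem_map.1 hp
      exact (hG q hq).symm
  refine ⟨a, ha, Or.inl (Or.inr fun p hp => ?_)⟩
  rw [hd p hp]
  exact .refl _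

/-- If `H` links the components of every pair of `G`, it links whatever `G`, or the swap of `G`,
covers. -/
theorem Cert.of_linked {Γ : Set (List V × List V)} {G H : List (V × V)}
    (hGH : ∀ p ∈ G, Linked H p.1 p.2) (h : Cert Γ G) : Cert Γ H := by
  have key : ∀ G' : List (V × V), (∀ p ∈ G', Linked H p.1 p.2) → ∀ S, Covers G' S →
      Covers H S := by
    intro G' hG' S hS
    right
    intro p hp
    rcases hS with hS | hS
    · exact hG' p (hS p hp)
    · refine (hS p hp).map fun a x hx y hy => ?_
      exact .trans _ _ _ (.symm _ _ (hG' _ hx)) (hG' _ hy)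
  obtain ⟨a, ha, h⟩ := h
  refine ⟨a, ha, Or.inl ?_⟩
  rcases h with h | h
  · exact key G hGH _ h
  · refine key _ (fun p hp => ?_) _ h
    obtain ⟨q, hq, rfl⟩ := List.mem_map.1 hp
    exact .symm _ _ (hGH q hq)

theorem zip_swap_map (x y : List V) : (x.zip y).map Prod.swap = y.zip x := by
  simp

/-- Soundness of the criterion; the premise of every rule has equal lengths when its conclusion
does. -/
theorem cert_of_deriv {Γ : Set (List V × List V)} {x y : List V} (h : ExclDeriv Γ x y) :
    x.length = y.length → Cert Γ (x.zip y) := by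
  induction h with
  | @ax x y h => exact fun _ => ⟨(x, y), h, Or.inl (Or.inl fun _ hp => hp)⟩
  | @e1 x y z _ _ ih =>
    intro _
    refine (ih rfl).of_diag (fun p hp => ?_) _
    obtain ⟨i, hi, rfl⟩ := List.mem_iff_getElem.1 hp
    simp
  | @e2 x y _ ih =>
    intro hl
    have := (ih hl.symm).swap
    rwa [zip_swap_map] at this
  | @e3 x y u v _ huv ih =>
    intro hl
    have hxy : x.length = y.length := by simp at hl; omega
    rw [List.zip_append hxy]
    exact (ih hxy).mono (List.subset_append_left _ _)
  | @e4 x y u v hxy huv _ ih =>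
    intro hl
    have := ih (by simp; omega)
    rw [List.zip_append (by simp; omega), List.zip_append hxy] at this
    rw [List.zip_append hxy]
    refine this.mono fun p hp => ?_
    simp only [List.mem_append] at hp ⊢
    tauto
  | @e5 x y z u v w hxu hyv _ ih =>
    intro hl
    have hzw : z.length = w.length := by simp at hl; omega
    have := ih (by simp; omega)
    rw [List.zip_append (by simp; omega), List.zip_append hxu] at this
    rw [List.zip_append (by simp; omega), List.zip_append hxu]
    refine this.mono fun p hp => ?_
    simp only [List.mem_append] at hp ⊢
    tauto
  | @e6 x y w z hxy _ ih =>
    intro hl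
    have hzx : z.length = x.length := by simp at hl; omega
    have := ih (by simp; omega)
    rw [List.zip_append hxy] at this
    rw [List.zip_append hzx]
    refine this.of_linked fun p hp => ?_
    rcases List.mem_append.1 hp with hp | hp
    · obtain ⟨i, hi, rfl⟩ := List.mem_iff_getElem.1 hp
      simp only [List.length_zip] at hi
      have hix : i < x.length := by omega
      have hiy : i < y.length := by omega
      have hiz : i < z.length := by omega
      refine .rel _ _ ⟨z[i], List.mem_append_left _ ?_, List.mem_append_right _ ?_⟩
      · exact List.mem_iff_getElem.2 ⟨i, by simp; omega, by simp⟩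
      · exact List.mem_iff_getElem.2 ⟨i, by simp; omega, by simp⟩
    · obtain ⟨i, hi, rfl⟩ := List.mem_iff_getElem.1 hp
      simp only [List.getElem_zip]
      exact .refl _

theorem der_zip {Γ : Set (List V × List V)} {x y : List V} (hl : x.length = y.length) :
    Der Γ (x.zip y) ↔ ExclDeriv Γ x y := by
  unfold Der
  rw [List.map_fst_zip hl.le, List.map_snd_zip hl.ge]

theorem Der.of_covers {Γ : Set (List V × List V)} {G S : List (V × V)} (hS : Der Γ S)
    (h : Covers G S) : Der Γ G := by
  rcases h with h | h
  · exact hS.mono h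
  · obtain ⟨n, hn⟩ := exists_bisect_forall S h
    exact Der.of_bisect n S hS hn

theorem exclDeriv_iff {Γ : Set (List V × List V)} (hΓ : ∀ a ∈ Γ, a.1.length = a.2.length)
    {x y : List V} (hl : x.length = y.length) :
    ExclDeriv Γ x y ↔ Cert Γ (x.zip y) := by
  refine ⟨fun h => cert_of_deriv h hl, ?_⟩
  rintro ⟨a, ha, h⟩
  have hS : Der Γ (a.1.zip a.2) := (der_zip (hΓ a ha)).2 (.ax ha)
  rcases h with h | h
  · exact (der_zip hl).1 (hS.of_covers h)
  · have := (hS.of_covers h).swap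
    rw [zip_swap_map, zip_swap_map] at this
    exact (der_zip hl).1 this

/-! ### Computability of the characterization -/

/-- Linkedness as a bounded quantification: no union of components, among the finitely many right
vertices, separates `x` from `y`. -/
theorem linked_iff (G : List (V × V)) (x y : V) :
    Linked G x y ↔ ∀ C ∈ (x :: G.map Prod.snd).sublists',
      (∀ p ∈ G, ∀ q ∈ G, ¬ p.1 = q.1 ∨ ¬ p.2 ∈ C ∨ q.2 ∈ C) → ¬ x ∈ C ∨ y ∈ C := by
  classical
  constructor
  · intro h C hsub hC
    clear hsub
    have key : x ∈ C ↔ y ∈ C := by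
      induction h with
      | rel x y hr =>
        obtain ⟨a, h1, h2⟩ := hr
        have e1 := hC _ h1 _ h2
        have e2 := hC _ h2 _ h1
        simp only [not_true_eq_false, false_or] at e1 e2
        tauto
      | refl x => exact Iff.rfl
      | symm x y _ ih => exact ih.symm
      | trans x y z _ _ ih1 ih2 => exact ih1.trans ih2
    tauto
  · intro h
    have := h ((x :: G.map Prod.snd).filter fun v => Linked G x v)
      (List.mem_sublists'.2 List.filter_sublist) ?_
    · rcases this with h1 | h1
      · have hx : Linked G x x := .refl x
        exact absurd (List.mem_filter.2 ⟨by simp, by simpa using hx⟩) h1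
      · simpa using (List.mem_filter.1 h1).2
    · intro p hp q hq
      by_cases he : p.1 = q.1
      · by_cases hm : p.2 ∈ (x :: G.map Prod.snd).filter fun v => Linked G x v
        · refine Or.inr (Or.inr (List.mem_filter.2 ⟨?_, ?_⟩))
          · exact List.mem_cons_of_mem _ (List.mem_map.2 ⟨q, hq, rfl⟩)
          · have hl : Linked G x p.2 := by simpa using (List.mem_filter.1 hm).2
            have hr : Linked G x q.2 :=
              .trans _ _ _ hl (.rel _ _ ⟨p.1, hp, by rw [he]; exact hq⟩)
            simpa using hr
        · exact Or.inr (Or.inl hm)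
      · exact Or.inl he

section Computable

open Primrec

variable {α β : Type*} [Primcodable α] [Primcodable β]

theorem primrecPred_ball {f : α → List β} {P : α → β → Prop} (hf : Primrec f)
    (hP : PrimrecPred fun q : α × β => P q.1 q.2) : PrimrecPred fun a => ∀ b ∈ f a, P a b := by
  have h : PrimrecRel fun (b : β) (a : α) => P a b := hP.comp (snd.pair fst)
  exact (PrimrecRel.forall_mem_list h).comp hf .id

theorem primrecPred_bex {f : α → List β} {P : α → β → Prop} (hf : Primrec f)
    (hP : PrimrecPred fun q : α × β => P q.1 q.2) : PrimrecPred fun a => ∃ b ∈ f a, P a b := by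
  have h : PrimrecRel fun (b : β) (a : α) => P a b := hP.comp (snd.pair fst)
  exact (PrimrecRel.exists_mem_list h).comp hf .id

theorem primrecPred_mem {f : α → β} {g : α → List β} (hf : Primrec f) (hg : Primrec g) :
    PrimrecPred fun a => f a ∈ g a :=
  (primrecPred_bex hg (P := fun a b => b = f a)
    (Primrec.eq.comp snd (hf.comp fst))).of_eq fun a => by simp

theorem primrec_sublists' : Primrec (List.sublists' : List β → List (List β)) := by
  have h : Primrec fun l : List β =>
      l.foldr (fun b s => s ++ s.map (List.cons b)) ([[]] : List (List β)) := by
    refine list_foldr (h := fun (_ : List β) (q : β × List (List β)) =>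
      q.2 ++ q.2.map (List.cons q.1)) .id (.const _) ?_
    refine list_append.comp (snd.comp snd) (list_map (snd.comp snd) ?_)
    exact list_cons.comp (fst.comp (snd.comp fst)) snd
  refine h.of_eq fun l => ?_
  induction l with
  | nil => simp
  | cons a l ih => rw [List.foldr_cons, ih, List.sublists'_cons]

theorem primrec_zip : Primrec fun t : List α × List β => t.1.zip t.2 := by
  have h : Primrec fun t : List α × List β => (List.range t.1.length).filterMap fun i =>
      (t.1[i]?).bind fun a => (t.2[i]?).map fun b => (a, b) := by
    refine listFilterMap (list_range.comp (list_length.comp fst)) ?_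
    refine option_bind (list_getElem?.comp (fst.comp fst) snd) ?_
    refine option_map (list_getElem?.comp (snd.comp (fst.comp fst)) (snd.comp fst)) ?_
    exact (snd.comp fst).pair snd
  refine h.of_eq fun ⟨x, y⟩ => ?_
  induction x generalizing y with
  | nil => simp
  | cons a x ih =>
    cases y with
    | nil => simp
    | cons b y =>
      simp only [List.length_cons, List.range_succ_eq_map, List.zip_cons_cons]
      simpa [List.filterMap_map, Function.comp_def] using ih y

variable {W : Type*} [Primcodable W]

theorem primrecPred_linked :
    PrimrecPred fun t : List (W × W) × (W × W) => Linked t.1 t.2.1 t.2.2 := by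
  refine PrimrecPred.of_eq ?_ fun t => (linked_iff t.1 t.2.1 t.2.2).symm
  refine primrecPred_ball
    (f := fun t : List (W × W) × (W × W) => (t.2.1 :: t.1.map Prod.snd).sublists')
    (P := fun t C => (∀ p ∈ t.1, ∀ q ∈ t.1, ¬ p.1 = q.1 ∨ ¬ p.2 ∈ C ∨ q.2 ∈ C) →
      ¬ t.2.1 ∈ C ∨ t.2.2 ∈ C)
    (primrec_sublists'.comp (list_cons.comp (fst.comp snd) (list_map fst (snd.comp snd)))) ?_
  have h1 : PrimrecPred fun q : (List (W × W) × (W × W)) × List W =>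
      ∀ p ∈ q.1.1, ∀ r ∈ q.1.1, ¬ p.1 = r.1 ∨ ¬ p.2 ∈ q.2 ∨ r.2 ∈ q.2 := by
    refine primrecPred_ball (f := fun q : (List (W × W) × (W × W)) × List W => q.1.1)
      (P := fun q p => ∀ r ∈ q.1.1, ¬ p.1 = r.1 ∨ ¬ p.2 ∈ q.2 ∨ r.2 ∈ q.2) (fst.comp fst) ?_
    refine primrecPred_ball
      (f := fun q : ((List (W × W) × (W × W)) × List W) × (W × W) => q.1.1.1)
      (P := fun q r => ¬ q.2.1 = r.1 ∨ ¬ q.2.2 ∈ q.1.2 ∨ r.2 ∈ q.1.2)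
      (fst.comp (fst.comp fst)) ?_
    refine PrimrecPred.or (PrimrecPred.not (Primrec.eq.comp (fst.comp (snd.comp fst))
      (fst.comp snd))) (PrimrecPred.or (PrimrecPred.not ?_) ?_)
    · exact primrecPred_mem (snd.comp (snd.comp fst)) (snd.comp (fst.comp fst))
    · exact primrecPred_mem (snd.comp snd) (snd.comp (fst.comp fst))
  have h2 : PrimrecPred fun q : (List (W × W) × (W × W)) × List W =>
      ¬ q.1.2.1 ∈ q.2 ∨ q.1.2.2 ∈ q.2 :=
    PrimrecPred.or (PrimrecPred.not (primrecPred_mem (fst.comp (snd.comp fst)) snd))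
      (primrecPred_mem (snd.comp (snd.comp fst)) snd)
  exact (h1.not.or h2).of_eq fun q => by tauto

theorem primrecPred_covers :
    PrimrecPred fun t : List (W × W) × List (W × W) => Covers t.1 t.2 := by
  refine PrimrecPred.or ?_ ?_
  · exact primrecPred_ball (f := fun t : List (W × W) × List (W × W) => t.2)
      (P := fun t p => p ∈ t.1) snd (primrecPred_mem snd (fst.comp fst))
  · exact primrecPred_ball (f := fun t : List (W × W) × List (W × W) => t.2)
      (P := fun t p => Linked t.1 p.1 p.2) snd
      (primrecPred_linked.comp ((fst.comp fst).pair snd))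

theorem primrecPred_cert :
    PrimrecPred fun t : List (List W × List W) × List W × List W =>
      Cert {a | a ∈ t.1} (t.2.1.zip t.2.2) := by
  refine primrecPred_bex (f := fun t : List (List W × List W) × List W × List W => t.1)
    (P := fun t a => Covers (t.2.1.zip t.2.2) (a.1.zip a.2) ∨
      Covers ((t.2.1.zip t.2.2).map Prod.swap) (a.1.zip a.2)) fst ?_
  have hG : Primrec fun q : (List (List W × List W) × List W × List W) × (List W × List W) =>
      q.1.2.1.zip q.1.2.2 := primrec_zip.comp (snd.comp fst)
  have hS : Primrec fun q : (List (List W × List W) × List W × List W) × (List W × List W) =>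
      q.2.1.zip q.2.2 := primrec_zip.comp snd
  refine PrimrecPred.or (primrecPred_covers.comp (hG.pair hS))
    (primrecPred_covers.comp ((list_map hG ?_).pair hS))
  exact ((snd.comp snd).pair (fst.comp snd)).of_eq fun _ => rfl

end Computable

end ExclDecide

/-- Decidability of the implication problem for exclusion atoms:
over a countable set of variables with decidable equality, the relation
`Σ ⊢ x|y` (with `Σ` a finite set of exclusion atoms, given as a list) is
decidable (computable). -/
theorem exclusion_implication_decidable {V : Type} [Primcodable V] [DecidableEq V] :
    ComputablePred (fun t : List (List V × List V) × List V × List V =>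
      (∀ a ∈ t.1, a.1.length = a.2.length) ∧ t.2.1.length = t.2.2.length ∧
        ExclDeriv {a | a ∈ t.1} t.2.1 t.2.2) := by
  have h1 : PrimrecPred fun t : List (List V × List V) × List V × List V =>
      ∀ a ∈ t.1, a.1.length = a.2.length :=
    ExclDecide.primrecPred_ball (f := fun t : List (List V × List V) × List V × List V => t.1)
      (P := fun _ a => a.1.length = a.2.length) Primrec.fst
      (Primrec.eq.comp (Primrec.list_length.comp (Primrec.fst.comp Primrec.snd))
        (Primrec.list_length.comp (Primrec.snd.comp Primrec.snd)))
  have h2 : PrimrecPred fun t : List (List V × List V) × List V × List V =>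
      t.2.1.length = t.2.2.length :=
    Primrec.eq.comp (Primrec.list_length.comp (Primrec.fst.comp Primrec.snd))
      (Primrec.list_length.comp (Primrec.snd.comp Primrec.snd))
  refine PrimrecPred.computablePred ((h1.and (h2.and ExclDecide.primrecPred_cert)).of_eq fun t => ?_)
  refine and_congr_right fun hΓ => and_congr_right fun hl => ?_
  exact (ExclDecide.exclDeriv_iff hΓ hl).symm
end

section
/- Failure of locality for approximate exclusion atoms: there exists a team T over the variables {x, u, y, v} with values in ℕ, namely T = {s_1, s_2, s_3} where s_1(x,u,y,v) = (0,1,0,1), s_2(x,u,y,v) = (0,2,0,2), s_3(x,u,y,v) = (1,2,2,1), such that the restriction of T to the variables {x, y} (the team {(x↦0, y↦0), (x↦1, y↦2)}) satisfies x|_{1/2} y, but T does not satisfy xu|_{1/2} yv (where xu and yv denote the pairs of variables ⟨x,u⟩ and ⟨y,v⟩). -/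
/-- `apprSat T x y p` says that the team `T` satisfies the approximate exclusion
atom `x|_p y`: there is a subteam `T' ⊆ T` with `|T'| ≤ p·|T|` such that
`T \ T' ⊨ x|y`. -/
def apprSat {V M : Type*} (T : Finset (V → M)) (x y : List V) (p : ℝ) : Prop :=
  letI := Classical.decEq (V → M)
  ∃ T' ⊆ T, (T'.card : ℝ) ≤ p * T.card ∧ exclSat (T \ T') x y

/-- The team of Example 2 (variables `x, u, y, v` are `0, 1, 2, 3 : Fin 4`). -/
def exampleTeam : Finset (Fin 4 → ℕ) := {![0, 1, 0, 1], ![0, 2, 0, 2], ![1, 2, 2, 1]}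

/-- Any subteam witnessing an approximate exclusion atom contains every assignment that violates
the exclusion atom on its own. -/
theorem apprSat.exists_selfViolating_mem {V M : Type*} {T : Finset (V → M)} {x y : List V} {p : ℝ}
    (h : apprSat T x y p) :
    ∃ T' : Finset (V → M), (T'.card : ℝ) ≤ p * T.card ∧ ∀ s ∈ T, x.map s = y.map s → s ∈ T' := by
  classical
  obtain ⟨T', -, hcard, hexcl⟩ := h
  refine ⟨T', hcard, fun s hs hxy => ?_⟩
  by_contra hs'
  refine hexcl s ?_ s ?_ hxy <;> simp [hs, hs']

/-- Failure of locality for approximate exclusion atoms: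
the restriction of `exampleTeam` to the variables `x, y` is the team
`{(x↦0, y↦0), (x↦1, y↦2)}` and satisfies `x|_{1/2} y`, but `exampleTeam`
does not satisfy `xu|_{1/2} yv`. -/
theorem locality_fails :
    exampleTeam.image (fun s => ![s 0, s 2]) = ({![0, 0], ![1, 2]} : Finset (Fin 2 → ℕ)) ∧
    apprSat (exampleTeam.image fun s => ![s 0, s 2]) [0] [1] (1/2 : ℝ) ∧
    ¬ apprSat exampleTeam [0, 1] [2, 3] (1/2 : ℝ) := by
  have himg : exampleTeam.image (fun s => ![s 0, s 2]) =
      ({![0, 0], ![1, 2]} : Finset (Fin 2 → ℕ)) := by decide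
  refine ⟨himg, ?_, ?_⟩
  · rw [himg]
    refine ⟨{![0, 0]}, by decide, ?_, ?_⟩
    · have hcard : ({![0, 0], ![1, 2]} : Finset (Fin 2 → ℕ)).card = 2 := by decide
      rw [hcard]
      simp
    · intro s₁ h₁ s₂ h₂
      simp only [Finset.mem_sdiff, Finset.mem_insert, Finset.mem_singleton] at h₁ h₂
      obtain rfl : s₁ = ![1, 2] := by tauto
      obtain rfl : s₂ = ![1, 2] := by tauto
      simp
  · intro h
    obtain ⟨T', hcard, hmem⟩ := h.exists_selfViolating_mem
    have h₁ : ![0, 1, 0, 1] ∈ T' := hmem _ (by decide) rfl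
    have h₂ : ![0, 2, 0, 2] ∈ T' := hmem _ (by decide) rfl
    have htwo : 1 < T'.card := Finset.one_lt_card.2 ⟨_, h₁, _, h₂, by decide⟩
    have hthree : exampleTeam.card = 3 := by decide
    have htwo' : (2 : ℝ) ≤ T'.card := by exact_mod_cast htwo
    rw [hthree] at hcard
    norm_num at hcard
    linarith
end

section
/- Soundness of the proof system for approximate exclusion atoms: if Σ is a set of approximate exclusion atoms and Σ ⊢ x|_p y (derivable by the rules A1–A8), then Σ ⊨ x|_p y (every team satisfying all atoms of Σ satisfies x|_p y). -/
/-- Derivability of approximate exclusion atoms from a set `Γ` of approximate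
exclusion atoms by the rules A1–A8 (juxtaposition is list concatenation). -/
inductive ApprDeriv {V : Type*} (Γ : Set (List V × List V × ℝ)) :
    List V → List V → ℝ → Prop where
  | ax {x y : List V} {p : ℝ} : (x, y, p) ∈ Γ → ApprDeriv Γ x y p
  | a1 {x y z : List V} {p : ℝ} : ApprDeriv Γ x x p → p < 1 → y.length = z.length →
      ApprDeriv Γ y z 0
  | a2 {x y : List V} {p : ℝ} : ApprDeriv Γ x y p → ApprDeriv Γ y x p
  | a3 {x y u v : List V} {p : ℝ} : ApprDeriv Γ x y p → u.length = v.length →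
      ApprDeriv Γ (x ++ u) (y ++ v) p
  | a4 {x y u v : List V} {p : ℝ} : x.length = y.length → u.length = v.length →
      ApprDeriv Γ (x ++ u ++ u) (y ++ v ++ v) p → ApprDeriv Γ (x ++ u) (y ++ v) p
  | a5 {x y z u v w : List V} {p : ℝ} : x.length = u.length → y.length = v.length →
      ApprDeriv Γ (x ++ y ++ z) (u ++ v ++ w) p →
      ApprDeriv Γ (x ++ z ++ y) (u ++ w ++ v) p
  | a6 {x y w z : List V} {p : ℝ} : x.length = y.length →
      ApprDeriv Γ (x ++ w) (y ++ w) p → ApprDeriv Γ (z ++ z) (x ++ y) p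
  | a7 {x y : List V} {p q : ℝ} : ApprDeriv Γ x y q → q ≤ p → p ≤ 1 →
      ApprDeriv Γ x y p
  | a8 {x y : List V} : x.length = y.length → ApprDeriv Γ x y 1

/-- An implication between exclusion atoms, valid in every team, lifts to their approximate
versions with the same `p`. -/
lemma apprSat.imp {V M : Type*} {T : Finset (V → M)} {x y x' y' : List V} {p : ℝ}
    (h : apprSat T x y p) (hi : ∀ S : Finset (V → M), exclSat S x y → exclSat S x' y') :
    apprSat T x' y' p := by
  obtain ⟨T', hT', hc, he⟩ := h
  exact ⟨T', hT', hc, hi _ he⟩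

lemma apprSat.eq_empty {V M : Type*} {T : Finset (V → M)} {x : List V} {p : ℝ}
    (h : apprSat T x x p) (hp : p < 1) : T = ∅ := by
  classical
  obtain ⟨T', hT', hc, he⟩ := h
  have hTT' : T = T' := by
    refine Finset.Subset.antisymm (fun s hs => ?_) hT'
    by_contra hn
    exact he s (Finset.mem_sdiff.2 ⟨hs, hn⟩) s (Finset.mem_sdiff.2 ⟨hs, hn⟩) rfl
  subst hTT'
  by_contra hne
  have hpos : (0 : ℝ) < T.card := by
    exact_mod_cast Finset.card_pos.2 (Finset.nonempty_iff_ne_empty.2 hne)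
  nlinarith

/-- Soundness of the proof system A1–A8 for approximate
exclusion atoms. -/
theorem appr_soundness {V : Type*} (Γ : Set (List V × List V × ℝ))
    (x y : List V) (p : ℝ) (h : ApprDeriv Γ x y p) :
    ∀ (M : Type*) (T : Finset (V → M)),
      (∀ a ∈ Γ, apprSat T a.1 a.2.1 a.2.2) → apprSat T x y p := by
  intro M T hΓ
  induction h with
  | ax hm => exact hΓ _ hm
  | a1 _ hp _ ih =>
    have hT := ih.eq_empty hp
    subst hT
    exact ⟨∅, by simp, by simp, by simp [exclSat]⟩
  | a2 _ ih => exact ih.imp fun S hS s₁ h₁ s₂ h₂ e => hS s₂ h₂ s₁ h₁ e.symm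
  | a3 _ hl ih =>
    refine ih.imp fun S hS s₁ h₁ s₂ h₂ e => hS s₁ h₁ s₂ h₂ ?_
    simp only [List.map_append] at e
    exact (List.append_inj' e (by simpa using hl)).1
  | a4 _ hl _ ih =>
    refine ih.imp fun S hS s₁ h₁ s₂ h₂ e => hS s₁ h₁ s₂ h₂ ?_
    simp only [List.map_append] at e ⊢
    obtain ⟨e₁, e₂⟩ := List.append_inj' e (by simpa using hl)
    rw [e₁, e₂]
  | a5 hx hy _ ih =>
    refine ih.imp fun S hS s₁ h₁ s₂ h₂ e => hS s₁ h₁ s₂ h₂ ?_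
    simp only [List.map_append] at e ⊢
    obtain ⟨e₁, e₂⟩ := List.append_inj' e (by simpa using hy)
    obtain ⟨e₃, e₄⟩ := List.append_inj e₁ (by simpa using hx)
    rw [e₂, e₃, e₄]
  | a6 hl _ ih =>
    -- A coincidence `s₁(zz) = s₂(xy)` contradicts the premise at the pair `s₂, s₂`.
    refine ih.imp fun S hS s₁ h₁ s₂ h₂ e => hS s₂ h₂ s₂ h₂ ?_
    simp only [List.map_append] at e ⊢
    have hlen := congrArg List.length e
    simp only [List.length_append, List.length_map] at hlen
    obtain ⟨e₁, e₂⟩ := List.append_inj e (by simp only [List.length_map]; omega)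
    rw [← e₁, ← e₂]
  | a7 _ hq _ ih =>
    obtain ⟨T', hT', hc, he⟩ := ih
    exact ⟨T', hT', hc.trans (by gcongr), he⟩
  | a8 _ => exact ⟨T, subset_rfl, by simp, by simp [exclSat]⟩
end

section
/- Decidability of the implication problem for approximate exclusion atoms: over a countable set of variables with decidable equality and rational approximation degrees, the relation 'Σ ⊢ x|_p y', where Σ ranges over finite sets of approximate exclusion atoms, x|_p y over approximate exclusion atoms with |x| = |y| and 0 ≤ p < 1/2, is decidable. -/
/-!
Every rule has at most one premise, so a derivation of `x|_p y` with `p < 1` is a chain that starts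
at a single atom `u|_q v` of `Γ`. View an atom `x|y` as the relation `{(xᵢ, yᵢ)}` (`ZipRel`), and
write `S` and `Q` for the relations of `u|v` and `x|y`. Rules A3–A5 allow passing from `S` to any
larger relation, A2 transposes a relation, and A6 drops diagonal pairs and replaces each remaining
pair `(a, b)` by `(c, a)` and `(c, b)`. Iterating A6 replaces a pair by a path whose length doubles
each time (`Near`), so `Q` can be reached by A6 when every pair of `S` lies in the equivalence
relation `Linked Q` generated by the pairs `b, d` having a common `z` with `(z, b), (z, d) ∈ Q`.
This leaves four ways to get from `S` to `Q`: `S` is contained in `Q`, in its transpose, in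
`Linked Q`, or in `Linked` of the transpose (`Follows`). The list of these four is closed under all
the rules (`ApprDerivQ.sound`). Rule A1 needs a derivable `x|_q x` with `q < 1`; the relation of the
starting atom is then contained in the diagonal, so that `Γ` itself has an atom of this kind
(`Inconsistent`). Altogether (`apprDerivQ_iff`), `x|_p y` with `0 ≤ p < 1` is derivable iff `Γ` is
inconsistent or some `u|_q v` in `Γ` with `q ≤ p` satisfies `Follows`.

The criterion is primitive recursive: the relations are finite, and `Linked Q` is computed by
merging classes one edge at a time (`mergeAll`). The degrees need care, because the
`Primcodable ℚ` instance encodes a rational number by the rank of its reduced fraction among all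
codes of reduced fractions. The fraction is recovered from the rank by a bounded search
(`primrec_ratCode`), after which `≤` is a comparison of cross products.
-/

/-- Derivability of approximate exclusion atoms (with rational approximation
degrees) from a set `Γ` by the rules A1–A8 (juxtaposition is concatenation). -/
inductive ApprDerivQ {V : Type*} (Γ : Set (List V × List V × ℚ)) :
    List V → List V → ℚ → Prop where
  | ax {x y : List V} {p : ℚ} : (x, y, p) ∈ Γ → ApprDerivQ Γ x y p
  | a1 {x y z : List V} {p : ℚ} : ApprDerivQ Γ x x p → p < 1 → y.length = z.length →
      ApprDerivQ Γ y z 0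
  | a2 {x y : List V} {p : ℚ} : ApprDerivQ Γ x y p → ApprDerivQ Γ y x p
  | a3 {x y u v : List V} {p : ℚ} : ApprDerivQ Γ x y p → u.length = v.length →
      ApprDerivQ Γ (x ++ u) (y ++ v) p
  | a4 {x y u v : List V} {p : ℚ} : x.length = y.length → u.length = v.length →
      ApprDerivQ Γ (x ++ u ++ u) (y ++ v ++ v) p → ApprDerivQ Γ (x ++ u) (y ++ v) p
  | a5 {x y z u v w : List V} {p : ℚ} : x.length = u.length → y.length = v.length →
      ApprDerivQ Γ (x ++ y ++ z) (u ++ v ++ w) p →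
      ApprDerivQ Γ (x ++ z ++ y) (u ++ w ++ v) p
  | a6 {x y w z : List V} {p : ℚ} : x.length = y.length →
      ApprDerivQ Γ (x ++ w) (y ++ w) p → ApprDerivQ Γ (z ++ z) (x ++ y) p
  | a7 {x y : List V} {p q : ℚ} : ApprDerivQ Γ x y q → q ≤ p → p ≤ 1 →
      ApprDerivQ Γ x y p
  | a8 {x y : List V} : x.length = y.length → ApprDerivQ Γ x y 1


/-! ### Comparison of rational numbers is primitive recursive -/

section RatComparison

open Encodable

/-- The code of the reduced fraction `q.num / q.den` as a pair. The `Primcodable ℚ` instance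
encodes `q` not by this number but by its rank among all such numbers. -/
def ratCode (q : ℚ) : ℕ := @encode ℚ Rat.instEncodable q

theorem ratCode_eq (q : ℚ) : ratCode q = Nat.pair (@encode ℤ Int.encodable q.num) q.den := rfl

theorem encode_int_eq (a : ℤ) :
    @encode ℤ Int.encodable a = if 0 ≤ a then 2 * a.toNat else 2 * (-a).toNat - 1 := by
  cases a with
  | ofNat n =>
    have : (0 : ℤ) ≤ Int.ofNat n := Int.natCast_nonneg n
    rw [if_pos this]
    rfl
  | negSucc n =>
    have : ¬ (0 : ℤ) ≤ Int.negSucc n := by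
      have := Int.negSucc_lt_zero n
      lia
    rw [if_neg this]
    change 2 * n + 1 = 2 * (n + 1) - 1
    lia

/-- The code of `q` in the `Primcodable ℚ` instance. -/
def ratRank (q : ℚ) : ℕ := @encode ℚ Primcodable.toEncodable q

/-- `m` encodes a reduced fraction; the numerator `a` is encoded as `2 * a` if `0 ≤ a` and as
`2 * |a| - 1` otherwise, so that its absolute value is recovered as `(code + 1) / 2`. -/
def IsRatCode (m : ℕ) : Prop :=
  0 < m.unpair.2 ∧ ∀ k < m.unpair.2 + 1,
    ((m.unpair.1 + 1) / 2) % k = 0 ∧ m.unpair.2 % k = 0 → k = 1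

theorem isRatCode_iff (m : ℕ) : IsRatCode m ↔ ∃ q, ratCode q = m := by
  have key : IsRatCode m ↔ 0 < m.unpair.2 ∧ Nat.Coprime ((m.unpair.1 + 1) / 2) m.unpair.2 := by
    unfold IsRatCode
    refine and_congr_right fun h0 => ?_
    constructor
    · intro h
      refine h _ ?_ ⟨Nat.mod_eq_zero_of_dvd (Nat.gcd_dvd_left _ _),
        Nat.mod_eq_zero_of_dvd (Nat.gcd_dvd_right _ _)⟩
      exact Nat.lt_succ_of_le (Nat.le_of_dvd h0 (Nat.gcd_dvd_right _ _))
    · rintro h k - ⟨h1, h2⟩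
      exact Nat.eq_one_of_dvd_coprimes h (Nat.dvd_of_mod_eq_zero h1) (Nat.dvd_of_mod_eq_zero h2)
  rw [key]
  constructor
  · rintro ⟨h0, hc⟩
    obtain ⟨a, ha⟩ : ∃ a : ℤ, @encode ℤ Int.encodable a = m.unpair.1 :=
      ⟨Equiv.intEquivNat.symm m.unpair.1, Equiv.intEquivNat.apply_symm_apply _⟩
    have habs : (m.unpair.1 + 1) / 2 = a.natAbs := by
      rw [← ha, encode_int_eq]
      split_ifs <;> lia
    refine ⟨⟨a, m.unpair.2, h0.ne', habs ▸ hc⟩, ?_⟩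
    rw [ratCode_eq]
    change Nat.pair (@encode ℤ Int.encodable a) m.unpair.2 = m
    rw [ha, Nat.pair_unpair]
  · rintro ⟨q, rfl⟩
    rw [ratCode_eq, Nat.unpair_pair]
    have habs : (@encode ℤ Int.encodable q.num + 1) / 2 = q.num.natAbs := by
      rw [encode_int_eq]
      split_ifs <;> lia
    exact ⟨q.den_pos, by simpa only [habs] using q.reduced⟩

theorem primrecPred_isRatCode : PrimrecPred IsRatCode := by
  have hu1 : Primrec fun m : ℕ => m.unpair.1 := Primrec.fst.comp Primrec.unpair
  have hu2 : Primrec fun m : ℕ => m.unpair.2 := Primrec.snd.comp Primrec.unpair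
  have hR : PrimrecRel fun k m : ℕ =>
      ¬ (((m.unpair.1 + 1) / 2) % k = 0 ∧ m.unpair.2 % k = 0) ∨ k = 1 := by
    refine PrimrecPred.or (PrimrecPred.not (PrimrecPred.and ?_ ?_)) ?_
    · exact Primrec.eq.comp (Primrec.nat_mod.comp (Primrec.nat_div.comp
        (Primrec.succ.comp (hu1.comp Primrec.snd)) (Primrec.const 2)) Primrec.fst)
        (Primrec.const 0)
    · exact Primrec.eq.comp (Primrec.nat_mod.comp (hu2.comp Primrec.snd) Primrec.fst)
        (Primrec.const 0)
    · exact Primrec.eq.comp Primrec.fst (Primrec.const 1)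
  refine (PrimrecPred.and (Primrec.nat_lt.comp (Primrec.const 0) hu2)
    (hR.forall_lt.comp (Primrec.succ.comp hu2) Primrec.id)).of_eq fun m => ?_
  simp only [IsRatCode, imp_iff_not_or, id, Nat.succ_eq_add_one]

section
open Classical

theorem ratRank_eq (q : ℚ) : ratRank q = Nat.count IsRatCode (ratCode q) := by
  trans @List.countP ℕ (fun m => @decide _ (@decidableRangeEncode ℚ Rat.instEncodable m))
    (List.range (ratCode q))
  · rfl
  · rw [Nat.count, List.countP_congr]
    intro m _
    simp only [decide_eq_true_eq, isRatCode_iff]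
    rfl

theorem primrec_count_isRatCode : Primrec (Nat.count IsRatCode) := by
  refine (Primrec.list_length.comp ((Primrec.listFilter primrecPred_isRatCode).comp
    Primrec.list_range)).of_eq fun m => ?_
  rw [Nat.count, List.countP_eq_length_filter]

theorem le_count_isRatCode (k : ℕ) : k ≤ Nat.count IsRatCode (Nat.pair (2 * k) 1) := by
  induction k with
  | zero => exact Nat.zero_le _
  | succ k ih =>
    have hk : IsRatCode (Nat.pair (2 * k) 1) := by
      rw [isRatCode_iff]
      refine ⟨(k : ℚ), ?_⟩
      rw [ratCode_eq, encode_int_eq]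
      simp
    have h1 : Nat.count IsRatCode (Nat.pair (2 * k) 1 + 1) ≤
        Nat.count IsRatCode (Nat.pair (2 * (k + 1)) 1) :=
      Nat.count_monotone _ (Nat.pair_lt_pair_left 1 (by lia : 2 * k < 2 * (k + 1)))
    rw [Nat.count_succ, if_pos hk] at h1
    lia

/-- The code of `q` is the unique code of rank `ratRank q`. The search for it is bounded: the code
of a natural number `k` has rank at least `k`, so `ratCode q` is at most the code of
`ratRank q + 1`. -/
theorem primrec_ratCode : Primrec ratCode := by
  refine Primrec.of_graph ⟨fun q => Nat.pair (2 * (ratRank q + 1)) 1, ?_, fun q => ?_⟩ ?_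
  · exact Primrec₂.natPair.comp (Primrec.nat_double.comp (Primrec.succ.comp Primrec.encode))
      (Primrec.const 1)
  · by_contra! h
    have h1 := Nat.count_monotone IsRatCode h.le
    have h2 := le_count_isRatCode (ratRank q + 1)
    have h3 := ratRank_eq q
    change Nat.count IsRatCode (Nat.pair (2 * (ratRank q + 1)) 1) ≤
      Nat.count IsRatCode (ratCode q) at h1
    lia
  · refine (PrimrecPred.and (primrecPred_isRatCode.comp Primrec.snd)
      (Primrec.eq.comp (primrec_count_isRatCode.comp Primrec.snd)
        (Primrec.encode.comp Primrec.fst))).of_eq fun p => ?_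
    obtain ⟨q, m⟩ := p
    change IsRatCode m ∧ Nat.count IsRatCode m = ratRank q ↔ ratCode q = m
    constructor
    · rintro ⟨h1, h2⟩
      exact Nat.count_injective ((isRatCode_iff _).2 ⟨q, rfl⟩) h1
        ((ratRank_eq q).symm.trans h2.symm)
    · rintro rfl
      exact ⟨(isRatCode_iff _).2 ⟨q, rfl⟩, (ratRank_eq q).symm⟩

end

theorem primrec_rat_den : Primrec Rat.den :=
  (Primrec.snd.comp (Primrec.unpair.comp primrec_ratCode)).of_eq fun q => by
    rw [ratCode_eq, Nat.unpair_pair]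

theorem primrec_encode_num : Primrec fun q : ℚ => @encode ℤ Int.encodable q.num :=
  (Primrec.fst.comp (Primrec.unpair.comp primrec_ratCode)).of_eq fun q => by
    rw [ratCode_eq, Nat.unpair_pair]

theorem primrec_num_toNat : Primrec fun q : ℚ => q.num.toNat := by
  refine (Primrec.ite (Primrec.eq.comp (Primrec.nat_mod.comp primrec_encode_num
    (Primrec.const 2)) (Primrec.const 0)) (Primrec.nat_div.comp primrec_encode_num
    (Primrec.const 2)) (Primrec.const 0)).of_eq fun q => ?_
  rw [encode_int_eq]
  split_ifs <;> lia

theorem primrec_neg_num_toNat : Primrec fun q : ℚ => (-q.num).toNat := by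
  refine (Primrec.ite (Primrec.eq.comp (Primrec.nat_mod.comp primrec_encode_num
    (Primrec.const 2)) (Primrec.const 0)) (Primrec.const 0)
    (Primrec.nat_div.comp (Primrec.succ.comp primrec_encode_num) (Primrec.const 2))).of_eq
    fun q => ?_
  rw [encode_int_eq]
  split_ifs <;> lia

theorem primrecRel_rat_le : PrimrecRel fun q r : ℚ => q ≤ r := by
  have hP := primrec_num_toNat
  have hN := primrec_neg_num_toNat
  have hd := primrec_rat_den
  refine (Primrec.nat_le.comp
    (Primrec.nat_add.comp
      (Primrec.nat_mul.comp (hP.comp Primrec.fst) (hd.comp Primrec.snd))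
      (Primrec.nat_mul.comp (hN.comp Primrec.snd) (hd.comp Primrec.fst)))
    (Primrec.nat_add.comp
      (Primrec.nat_mul.comp (hP.comp Primrec.snd) (hd.comp Primrec.fst))
      (Primrec.nat_mul.comp (hN.comp Primrec.fst) (hd.comp Primrec.snd)))).of_eq fun p => ?_
  obtain ⟨q, r⟩ := p
  change q.num.toNat * r.den + (-r.num).toNat * q.den ≤
    r.num.toNat * q.den + (-q.num).toNat * r.den ↔ q ≤ r
  rw [Rat.le_iff]
  zify
  have hq : q.num = (q.num.toNat : ℤ) - ((-q.num).toNat : ℤ) := by lia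
  have hr : r.num = (r.num.toNat : ℤ) - ((-r.num).toNat : ℤ) := by lia
  generalize (q.num.toNat : ℤ) = a at *
  generalize ((-q.num).toNat : ℤ) = b at *
  generalize (r.num.toNat : ℤ) = c at *
  generalize ((-r.num).toNat : ℤ) = d at *
  rw [hq, hr, sub_mul, sub_mul]
  constructor <;> intro h <;> linarith

theorem primrecRel_rat_lt : PrimrecRel fun q r : ℚ => q < r :=
  (PrimrecPred.not (primrecRel_rat_le.comp Primrec.snd Primrec.fst)).of_eq fun _ => not_le

end RatComparison

/-! ### The relation associated with an atom -/

section Derivability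

variable {V : Type*}

/-- Atoms are seen as relations: `x|y` is the set of pairs `(xᵢ, yᵢ)`. -/
def ZipRel (x y : List V) (a b : V) : Prop := (a, b) ∈ x.zip y

/-- The equivalence relation generated by identifying `b` and `d` when they are related to a
common `z`. -/
def Linked (Q : V → V → Prop) : V → V → Prop :=
  Relation.EqvGen fun b d => ∃ z, Q z b ∧ Q z d

/-- The condition for deriving `x|_p y` from `u|_p v` by A2–A6 in terms of the relations `S` of `u|v`
and `Q` of `x|y`. -/
def Follows (S Q : V → V → Prop) : Prop :=
  (∀ a b, S a b → Q a b) ∨ (∀ a b, S a b → Q b a) ∨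
    (∀ a b, S a b → Linked Q a b) ∨ (∀ a b, S a b → Linked (fun a b => Q b a) a b)

/-- `Γ` contains an atom equivalent to some `x|_q x` with `q < 1`. -/
def Inconsistent (Γ : Set (List V × List V × ℚ)) : Prop :=
  ∃ a ∈ Γ, a.2.2 < 1 ∧ ∀ e ∈ a.1.zip a.2.1, e.1 = e.2

theorem Linked.le {Q : V → V → Prop} {E : V → V → Prop} (hE : Equivalence E)
    (h : ∀ z b d, Q z b → Q z d → E b d) {a b : V} (hab : Linked Q a b) : E a b := by
  induction hab with
  | rel _ _ h' => obtain ⟨z, h1, h2⟩ := h'; exact h _ _ _ h1 h2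
  | refl x => exact hE.refl x
  | symm _ _ _ ih => exact hE.symm ih
  | trans _ _ _ _ _ ih1 ih2 => exact hE.trans ih1 ih2

theorem Linked.equivalence (Q : V → V → Prop) : Equivalence (Linked Q) :=
  Relation.EqvGen.is_equivalence _

theorem Linked.mono {Q Q' : V → V → Prop} (h : ∀ a b, Q a b → Q' a b) {a b : V}
    (hab : Linked Q a b) : Linked Q' a b :=
  hab.le (Linked.equivalence Q') fun z _ _ h1 h2 => .rel _ _ ⟨z, h _ _ h1, h _ _ h2⟩

theorem Follows.mono {S Q Q' : V → V → Prop} (h : ∀ a b, Q a b → Q' a b) (hf : Follows S Q) :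
    Follows S Q' := by
  rcases hf with hf | hf | hf | hf
  · exact .inl fun a b hab => h _ _ (hf a b hab)
  · exact .inr (.inl fun a b hab => h _ _ (hf a b hab))
  · exact .inr (.inr (.inl fun a b hab => (hf a b hab).mono h))
  · exact .inr (.inr (.inr fun a b hab => (hf a b hab).mono fun a b => h b a))

theorem Follows.swap {S Q : V → V → Prop} (hf : Follows S Q) :
    Follows S fun a b => Q b a := by
  rcases hf with hf | hf | hf | hf
  · exact .inr (.inl hf)
  · exact .inl hf
  · exact .inr (.inr (.inr hf))
  · exact .inr (.inr (.inl hf))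

/-- Once the pairs of `Q` are linked by `Q'`, every disjunct of `Follows S Q` gives the third
disjunct for `Q'`. -/
theorem Follows.linked {S Q Q' : V → V → Prop} (h : ∀ a b, Q a b → Linked Q' a b)
    (hf : Follows S Q) : ∀ a b, S a b → Linked Q' a b := by
  have hE := Linked.equivalence Q'
  rcases hf with hf | hf | hf | hf <;> intro a b hab
  · exact h _ _ (hf a b hab)
  · exact hE.symm (h _ _ (hf a b hab))
  · exact Linked.le (Q := Q) hE
      (fun z b d h1 h2 => hE.trans (hE.symm (h _ _ h1)) (h _ _ h2)) (hf a b hab)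
  · exact Linked.le (Q := fun a b => Q b a) hE
      (fun z b d h1 h2 => hE.trans (h _ _ h1) (hE.symm (h _ _ h2))) (hf a b hab)

theorem exists_zip_of_mem_zip {x y z : List V} (hx : z.length = x.length)
    (hy : x.length = y.length) {a b : V} (h : ZipRel x y a b) :
    ∃ c, ZipRel z x c a ∧ ZipRel z y c b := by
  unfold ZipRel at h ⊢
  obtain ⟨i, hi, he⟩ := List.mem_iff_getElem.1 h
  rw [List.length_zip] at hi
  rw [List.getElem_zip] at he
  obtain ⟨rfl, rfl⟩ := Prod.mk.inj he
  refine ⟨z[i], ?_, ?_⟩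
  · exact List.mem_iff_getElem.2 ⟨i, by rw [List.length_zip]; lia, List.getElem_zip⟩
  · exact List.mem_iff_getElem.2 ⟨i, by rw [List.length_zip]; lia, List.getElem_zip⟩

theorem ZipRel.symm {x y : List V} {a b : V} (h : ZipRel x y a b) : ZipRel y x b a := by
  unfold ZipRel at h ⊢
  rw [← List.zip_swap, List.mem_map]
  exact ⟨_, h, rfl⟩

theorem eq_of_zipRel_self {x : List V} {a b : V} (h : ZipRel x x a b) : a = b := by
  unfold ZipRel at h
  obtain ⟨i, hi, he⟩ := List.mem_iff_getElem.1 h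
  rw [List.getElem_zip] at he
  obtain ⟨rfl, rfl⟩ := Prod.mk.inj he
  rfl

theorem zipRel_append {x y u v : List V} (h : x.length = y.length) (a b : V) :
    ZipRel (x ++ u) (y ++ v) a b ↔ ZipRel x y a b ∨ ZipRel u v a b := by
  unfold ZipRel
  rw [List.zip_append h, List.mem_append]

theorem Follows.eq_of_diag {S Q : V → V → Prop} (h : ∀ a b, Q a b → a = b)
    (hf : Follows S Q) : ∀ a b, S a b → a = b := by
  intro a b hab
  have h1 := hf.linked (Q' := Eq) (fun a b hQ => h a b hQ ▸ (Linked.equivalence _).refl a) a b hab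
  exact h1.le eq_equivalence fun z b d h1 h2 => h1.symm.trans h2

/-- Soundness of the relational criterion. Every rule has at most one premise, so a derivation is a
chain starting at one atom of `Γ` (or at A8), along which the degree only increases until A1 is
used. The rule A6 allows `z` of any length, so atoms with sides of different lengths may be
derived; they never lead back to atoms with sides of the same length. -/
theorem ApprDerivQ.sound {Γ : Set (List V × List V × ℚ)}
    (hΓ : ∀ a ∈ Γ, a.1.length = a.2.1.length ∧ 0 ≤ a.2.2 ∧ a.2.2 ≤ 1)
    {x y : List V} {p : ℚ} (h : ApprDerivQ Γ x y p) :
    p ≤ 1 ∧ (x.length = y.length → p = 1 ∨ Inconsistent Γ ∨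
      ∃ a ∈ Γ, a.2.2 ≤ p ∧ Follows (ZipRel a.1 a.2.1) (ZipRel x y)) := by
  induction h with
  | ax ha => exact ⟨(hΓ _ ha).2.2, fun _ => .inr (.inr ⟨_, ha, le_rfl, .inl fun _ _ h => h⟩)⟩
  | a1 _ hp _ ih =>
    refine ⟨zero_le_one, fun _ => .inr (.inl ?_)⟩
    rcases ih.2 rfl with h | h | ⟨a, ha, hap, hf⟩
    · exact absurd h hp.ne
    · exact h
    · exact ⟨a, ha, hap.trans_lt hp,
        fun e he => hf.eq_of_diag (fun _ _ => eq_of_zipRel_self) e.1 e.2 he⟩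
  | a2 _ ih =>
    refine ⟨ih.1, fun hl => (ih.2 hl.symm).imp_right (Or.imp_right ?_)⟩
    rintro ⟨a, ha, hap, hf⟩
    exact ⟨a, ha, hap, hf.swap.mono fun _ _ h => h.symm⟩
  | a3 _ hl' ih =>
    refine ⟨ih.1, fun hl => ?_⟩
    simp only [List.length_append] at hl
    have hl2 := Nat.add_right_cancel (hl'.symm ▸ hl)
    refine (ih.2 hl2).imp_right (Or.imp_right ?_)
    rintro ⟨a, ha, hap, hf⟩
    exact ⟨a, ha, hap, hf.mono fun a b h => (zipRel_append hl2 a b).2 (.inl h)⟩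
  | a4 h1 h2 _ ih =>
    refine ⟨ih.1, fun hl => (ih.2 (by simp [h1, h2])).imp_right (Or.imp_right ?_)⟩
    rintro ⟨a, ha, hap, hf⟩
    refine ⟨a, ha, hap, hf.mono fun a b h => ?_⟩
    rw [zipRel_append hl, zipRel_append h1] at h
    rw [zipRel_append h1]
    tauto
  | a5 h1 h2 _ ih =>
    refine ⟨ih.1, fun hl => ?_⟩
    simp only [List.length_append] at hl
    refine (ih.2 (by simp only [List.length_append]; lia)).imp_right (Or.imp_right ?_)
    rintro ⟨a, ha, hap, hf⟩
    refine ⟨a, ha, hap, hf.mono fun a b h => ?_⟩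
    rw [zipRel_append (by simp only [List.length_append]; lia), zipRel_append h1] at h ⊢
    tauto
  | @a6 x y w z _ h1 _ ih =>
    refine ⟨ih.1, fun hl => ?_⟩
    simp only [List.length_append] at hl
    have hz : z.length = x.length := by lia
    refine (ih.2 (by simp only [List.length_append]; lia)).imp_right (Or.imp_right ?_)
    rintro ⟨a, ha, hap, hf⟩
    refine ⟨a, ha, hap, .inr (.inr (.inl (hf.linked fun a b h => ?_)))⟩
    rw [zipRel_append h1] at h
    rcases h with h | h
    · obtain ⟨c, hc1, hc2⟩ := exists_zip_of_mem_zip hz h1 h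
      exact .rel _ _ ⟨c, (zipRel_append hz _ _).2 (.inl hc1), (zipRel_append hz _ _).2 (.inr hc2)⟩
    · exact eq_of_zipRel_self h ▸ (Linked.equivalence _).refl a
  | a7 _ hqp hp1 ih =>
    refine ⟨hp1, fun hl => ?_⟩
    rcases ih.2 hl with h | h | ⟨a, ha, hap, hf⟩
    · exact .inl (le_antisymm hp1 (h ▸ hqp))
    · exact .inr (.inl h)
    · exact .inr (.inr ⟨a, ha, hap.trans hqp, hf⟩)
  | a8 _ => exact ⟨le_rfl, fun _ => .inl rfl⟩

/-! ### Completeness of the relational criterion -/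

/-- Derivability of an atom given by its list of pairs `(xᵢ, yᵢ)`. -/
def PairDeriv (Γ : Set (List V × List V × ℚ)) (L : List (V × V)) (p : ℚ) : Prop :=
  ApprDerivQ Γ (L.map Prod.fst) (L.map Prod.snd) p

variable {Γ : Set (List V × List V × ℚ)} {p : ℚ}

theorem PairDeriv.exchange {A B C : List (V × V)} (h : PairDeriv Γ (A ++ B ++ C) p) :
    PairDeriv Γ (A ++ C ++ B) p := by
  unfold PairDeriv at h ⊢
  simp only [List.map_append] at h ⊢
  exact .a5 (by simp) (by simp) h

theorem PairDeriv.append {L : List (V × V)} (h : PairDeriv Γ L p) (M : List (V × V)) :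
    PairDeriv Γ (L ++ M) p := by
  unfold PairDeriv at h ⊢
  simp only [List.map_append] at h ⊢
  exact .a3 h (by simp)

theorem PairDeriv.contract {L M : List (V × V)} (h : PairDeriv Γ (L ++ M ++ M) p) :
    PairDeriv Γ (L ++ M) p := by
  unfold PairDeriv at h ⊢
  simp only [List.map_append] at h ⊢
  exact .a4 (by simp) (by simp) h

theorem PairDeriv.perm {L L' : List (V × V)} (hp : L.Perm L') (h : PairDeriv Γ L p) :
    PairDeriv Γ L' p := by
  suffices H : ∀ A : List (V × V), PairDeriv Γ (A ++ L) p → PairDeriv Γ (A ++ L') p from H [] h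
  clear h
  induction hp with
  | nil => exact fun _ h => h
  | cons e _ ih =>
    intro A h
    simpa using ih (A ++ [e]) (by simpa using h)
  | swap d e l =>
    intro A h
    have h1 : PairDeriv Γ (A ++ (d :: l) ++ [e]) p :=
      PairDeriv.exchange (B := [e]) (by simpa using h)
    have h2 : PairDeriv Γ ((A ++ [d]) ++ [e] ++ l) p :=
      PairDeriv.exchange (B := l) (by simpa using h1)
    simpa using h2
  | trans _ _ ih1 ih2 => exact fun A h => ih2 A (ih1 A h)

theorem PairDeriv.of_cons_mem {L : List (V × V)} {e : V × V} (he : e ∈ L)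
    (h : PairDeriv Γ (e :: L) p) : PairDeriv Γ L p := by
  obtain ⟨s, t, rfl⟩ := List.append_of_mem he
  have h1 : PairDeriv Γ ((s ++ t) ++ [e] ++ [e]) p := by
    refine h.perm ?_
    classical
    rw [List.perm_iff_count]
    intro f
    simp only [List.count_append, List.count_cons, List.count_nil]
    lia
  refine h1.contract.perm ?_
  classical
  rw [List.perm_iff_count]
  intro f
  simp only [List.count_append, List.count_cons, List.count_nil]
  lia

theorem PairDeriv.of_subset {S L : List (V × V)} (hSL : ∀ e ∈ S, e ∈ L) (h : PairDeriv Γ S p) :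
    PairDeriv Γ L p := by
  replace h := h.append L
  induction S with
  | nil => simpa using h
  | cons e S ih =>
    refine ih (fun f hf => hSL f (List.mem_cons_of_mem _ hf)) ?_
    exact PairDeriv.of_cons_mem (List.mem_append_right _ (hSL e List.mem_cons_self)) h

theorem PairDeriv.swap {L : List (V × V)} (h : PairDeriv Γ L p) :
    PairDeriv Γ (L.map Prod.swap) p := by
  unfold PairDeriv at h ⊢
  rw [List.map_map, List.map_map]
  exact .a2 h

/-- A6 in terms of pairs: diagonal pairs are dropped, and each remaining pair `(a, b)` is replaced
by `(c, a)` and `(c, b)` for a `c` of our choice. -/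
theorem PairDeriv.split {S : List (V × V)} {Q : V → V → Prop}
    (hS : ∀ a b, (a, b) ∈ S → a = b ∨ ∃ c, Q c a ∧ Q c b) (h : PairDeriv Γ S p) :
    ∃ S', PairDeriv Γ S' p ∧ ∀ a b, (a, b) ∈ S' → Q a b := by
  classical
  set N := S.filter fun e => ¬ e.1 = e.2 with hN
  set D := S.filter fun e => e.1 = e.2 with hD
  have hND : PairDeriv Γ (N ++ D) p := h.of_subset fun e he => by
    by_cases hd : e.1 = e.2 <;> simp [hN, hD, he, hd]
  have hc : ∀ e : V × V, ∃ c, e ∈ N → Q c e.1 ∧ Q c e.2 := fun e => by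
    by_cases he : e ∈ N
    · simp only [hN, List.mem_filter, decide_eq_true_eq] at he
      obtain ⟨c, hc⟩ := (hS e.1 e.2 he.1).resolve_left he.2
      exact ⟨c, fun _ => hc⟩
    · exact ⟨e.1, fun h => absurd h he⟩
  choose c hc using hc
  refine ⟨N.map (fun e => (c e, e.1)) ++ N.map (fun e => (c e, e.2)), ?_, ?_⟩
  · unfold PairDeriv at hND ⊢
    have hDD : D.map Prod.snd = D.map Prod.fst :=
      List.map_congr_left fun e he => by
        simp only [hD, List.mem_filter, decide_eq_true_eq] at he
        exact he.2.symm
    rw [List.map_append, List.map_append, hDD] at hND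
    have h6 := ApprDerivQ.a6 (z := N.map c) (by simp) hND
    simpa [Function.comp_def] using h6
  · intro a b hab
    simp only [List.mem_append, List.mem_map, Prod.mk.injEq] at hab
    rcases hab with ⟨e, he, rfl, rfl⟩ | ⟨e, he, rfl, rfl⟩
    · exact (hc e he).1
    · exact (hc e he).2

/-- `Near Q n a b` says that `a` and `b` are joined by a path of at most `2 ^ n` steps, each
step between two elements related to a common `z` by `Q`. -/
def Near (Q : V → V → Prop) : ℕ → V → V → Prop
  | 0 => fun a b => a = b ∨ ∃ z, Q z a ∧ Q z b
  | n + 1 => fun a b => ∃ c, Near Q n c a ∧ Near Q n c b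

theorem Near.refl (Q : V → V → Prop) (n : ℕ) (a : V) : Near Q n a a := by
  induction n with
  | zero => exact .inl rfl
  | succ n ih => exact ⟨a, ih, ih⟩

theorem Near.symm {Q : V → V → Prop} {n : ℕ} {a b : V} (h : Near Q n a b) : Near Q n b a := by
  cases n with
  | zero => exact h.imp Eq.symm fun ⟨z, h1, h2⟩ => ⟨z, h2, h1⟩
  | succ n => exact h.imp fun _ h => h.symm

theorem Near.mono {Q : V → V → Prop} {n m : ℕ} (hnm : n ≤ m) {a b : V} (h : Near Q n a b) :
    Near Q m a b := by
  induction hnm with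
  | refl => exact h
  | step _ ih => exact ⟨a, Near.refl Q _ a, ih⟩

theorem Near.of_linked {Q : V → V → Prop} {a b : V} (h : Linked Q a b) : ∃ n, Near Q n a b := by
  induction h with
  | rel _ _ h => exact ⟨0, .inr h⟩
  | refl x => exact ⟨0, .inl rfl⟩
  | symm _ _ _ ih => exact ih.imp fun _ h => h.symm
  | trans _ y _ _ _ ih1 ih2 =>
    obtain ⟨n, hn⟩ := ih1
    obtain ⟨m, hm⟩ := ih2
    exact ⟨max n m + 1, y, (hn.mono (le_max_left _ _)).symm, hm.mono (le_max_right _ _)⟩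

theorem PairDeriv.of_near {L : List (V × V)} (n : ℕ) {S : List (V × V)}
    (hS : ∀ a b, (a, b) ∈ S → Near (fun a b => (a, b) ∈ L) n a b) (h : PairDeriv Γ S p) :
    PairDeriv Γ L p := by
  induction n generalizing S with
  | zero =>
    obtain ⟨S', h1, h2⟩ := h.split hS
    exact h1.of_subset fun e he => h2 e.1 e.2 he
  | succ n ih =>
    obtain ⟨S', h1, h2⟩ := h.split fun a b hab => .inr (hS a b hab)
    exact ih h2 h1

theorem PairDeriv.of_linked {S L : List (V × V)}
    (hS : ∀ a b, (a, b) ∈ S → Linked (fun a b => (a, b) ∈ L) a b) (h : PairDeriv Γ S p) :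
    PairDeriv Γ L p := by
  obtain ⟨n, hn⟩ : ∃ n, ∀ a b, (a, b) ∈ S → Near (fun a b => (a, b) ∈ L) n a b := by
    clear h
    induction S with
    | nil => exact ⟨0, by simp⟩
    | cons e S ih =>
      obtain ⟨n, hn⟩ := ih fun a b hab => hS a b (List.mem_cons_of_mem _ hab)
      obtain ⟨m, hm⟩ := Near.of_linked (hS e.1 e.2 List.mem_cons_self)
      refine ⟨max n m, fun a b hab => ?_⟩
      rcases List.mem_cons.1 hab with rfl | hab
      · exact hm.mono (le_max_right _ _)
      · exact (hn a b hab).mono (le_max_left _ _)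
  exact h.of_near n hn

theorem PairDeriv.of_follows {S L : List (V × V)}
    (hf : Follows (fun a b => (a, b) ∈ S) (fun a b => (a, b) ∈ L)) (h : PairDeriv Γ S p) :
    PairDeriv Γ L p := by
  rcases hf with hf | hf | hf | hf
  · exact h.of_subset fun e he => hf e.1 e.2 he
  · refine h.swap.of_subset fun e he => ?_
    obtain ⟨d, hd, rfl⟩ := List.mem_map.1 he
    exact hf d.1 d.2 hd
  · exact h.of_linked hf
  · have h1 : PairDeriv Γ (L.map Prod.swap) p := h.of_linked fun a b hab =>
      (hf a b hab).mono fun a b hba => List.mem_map.2 ⟨(b, a), hba, rfl⟩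
    simpa [Function.comp_def] using h1.swap

theorem pairDeriv_zip {x y : List V} (h : x.length = y.length) :
    PairDeriv Γ (x.zip y) p ↔ ApprDerivQ Γ x y p := by
  rw [PairDeriv, List.map_fst_zip h.le, List.map_snd_zip h.ge]

theorem apprDerivQ_iff (hΓ : ∀ a ∈ Γ, a.1.length = a.2.1.length ∧ 0 ≤ a.2.2 ∧ a.2.2 ≤ 1)
    {x y : List V} (hl : x.length = y.length) (h0 : 0 ≤ p) (h1 : p < 1) :
    ApprDerivQ Γ x y p ↔ Inconsistent Γ ∨
      ∃ a ∈ Γ, a.2.2 ≤ p ∧ Follows (ZipRel a.1 a.2.1) (ZipRel x y) := by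
  constructor
  · exact fun h => (h.sound hΓ).2 hl |>.resolve_left h1.ne
  · rintro (⟨⟨u, v, q⟩, ha, hq, hd⟩ | ⟨⟨u, v, q⟩, ha, hq, hf⟩)
    · have huv : u.length = v.length := (hΓ _ ha).1
      have huv' : v = u := by
        have h2 : (u.zip v).map Prod.snd = (u.zip v).map Prod.fst :=
          List.map_congr_left fun e he => (hd e he).symm
        rwa [List.map_fst_zip huv.le, List.map_snd_zip huv.ge] at h2
      subst huv'
      exact .a7 (.a1 (.ax ha) hq hl) h0 h1.le
    · have huv : u.length = v.length := (hΓ _ ha).1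
      exact (pairDeriv_zip hl).1
        (((pairDeriv_zip huv).2 (.a7 (.ax ha) hq h1.le)).of_follows hf)

end Derivability

/-! ### Deciding the generated equivalence relation -/

section Algorithm

variable {V : Type*} [DecidableEq V]

/-- Apply to `v` the replacements in `L`, where `(s, t)` replaces `s` by `t`. -/
def classOf (L : List (V × V)) (v : V) : V :=
  L.foldl (fun v e => if v = e.1 then e.2 else v) v

/-- A list of replacements such that `classOf` picks a representative of each class of the
equivalence relation generated by `E`: each edge redirects the current representative of its first
end to that of the second. -/
def mergeAll (E : List (V × V)) : List (V × V) :=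
  E.foldl (fun L e => L ++ [(classOf L e.1, classOf L e.2)]) []

theorem classOf_concat (L : List (V × V)) (e : V × V) (v : V) :
    classOf (L ++ [e]) v = if classOf L v = e.1 then e.2 else classOf L v := by
  simp only [classOf, List.foldl_append, List.foldl_cons, List.foldl_nil]
  rfl

theorem mergeAll_concat (E : List (V × V)) (e : V × V) :
    mergeAll (E ++ [e]) =
      mergeAll E ++ [(classOf (mergeAll E) e.1, classOf (mergeAll E) e.2)] := by
  simp only [mergeAll, List.foldl_append, List.foldl_cons, List.foldl_nil]

theorem classOf_mergeAll (E : List (V × V)) (u v : V) :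
    classOf (mergeAll E) u = classOf (mergeAll E) v ↔
      Relation.EqvGen (fun a b => (a, b) ∈ E) u v := by
  induction E using List.reverseRecOn generalizing u v with
  | nil =>
    constructor
    · rintro h
      have h : u = v := h
      exact h ▸ .refl u
    · intro h
      induction h with
      | rel _ _ h => simp at h
      | refl => rfl
      | symm _ _ _ ih => exact ih.symm
      | trans _ _ _ _ _ ih1 ih2 => exact ih1.trans ih2
  | append_singleton E e ih =>
    have hold : ∀ {x y}, classOf (mergeAll E) x = classOf (mergeAll E) y →
        Relation.EqvGen (fun a b => (a, b) ∈ E ++ [e]) x y := fun h =>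
      Relation.EqvGen.mono (r := fun a b => (a, b) ∈ E) (fun _ _ h => List.mem_append_left _ h)
        _ _ ((ih _ _).1 h)
    have hnew : Relation.EqvGen (fun a b => (a, b) ∈ E ++ [e]) e.1 e.2 := .rel _ _ (by simp)
    constructor
    · intro h
      rw [mergeAll_concat, classOf_concat, classOf_concat] at h
      dsimp only at h
      split_ifs at h with h1 h2 h2
      · exact hold (h1.trans h2.symm)
      · exact ((hold h1).trans _ _ _ hnew).trans _ _ _ (hold h)
      · exact (hold h).trans _ _ _ (hnew.symm.trans _ _ _ (hold h2.symm))
      · exact hold h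
    · intro h
      induction h with
      | rel x y h =>
        rw [mergeAll_concat, classOf_concat, classOf_concat]
        rcases List.mem_append.1 h with h | h
        · rw [(ih x y).2 (.rel _ _ h)]
        · obtain rfl : (x, y) = e := by simpa using h
          dsimp only
          split_ifs <;> simp_all
      | refl => rfl
      | symm _ _ _ ih => exact ih.symm
      | trans _ _ _ _ _ ih1 ih2 => exact ih1.trans ih2

/-- Edges generating `Linked Q`; pairs of `Q` with different first components contribute loops. -/
def linkEdges (Q : List (V × V)) : List (V × V) :=
  Q.flatMap fun e => Q.map fun f => (e.2, if f.1 = e.1 then f.2 else e.2)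

theorem linked_iff_classOf (Q : List (V × V)) (u v : V) :
    Linked (fun a b => (a, b) ∈ Q) u v ↔
      classOf (mergeAll (linkEdges Q)) u = classOf (mergeAll (linkEdges Q)) v := by
  rw [classOf_mergeAll]
  constructor
  · refine fun h => h.le (Relation.EqvGen.is_equivalence _) fun z b d h1 h2 => .rel _ _ ?_
    simp only [linkEdges, List.mem_flatMap, List.mem_map]
    exact ⟨_, h1, _, h2, by simp⟩
  · intro h
    induction h with
    | rel x y h =>
      simp only [linkEdges, List.mem_flatMap, List.mem_map] at h
      obtain ⟨e, he, f, hf, h⟩ := h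
      split_ifs at h with hef
      · obtain ⟨rfl, rfl⟩ := Prod.mk.inj h
        exact .rel _ _ ⟨e.1, he, hef ▸ hf⟩
      · obtain ⟨rfl, rfl⟩ := Prod.mk.inj h
        exact .refl _
    | refl x => exact .refl x
    | symm _ _ _ ih => exact .symm _ _ ih
    | trans _ _ _ _ _ ih1 ih2 => exact .trans _ _ _ ih1 ih2

end Algorithm

/-! ### Primitive recursiveness of the criterion -/

section Computability

open Primrec

variable {V : Type*} [Primcodable V]

theorem primrec_zip : Primrec₂ fun x y : List V => x.zip y := by
  have h : Primrec fun t : List V × List V => (List.range t.1.length).filterMap fun i =>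
      t.1[i]?.bind fun a => t.2[i]?.map fun b => (a, b) := by
    refine listFilterMap (list_range.comp (list_length.comp fst)) ?_
    refine option_bind (list_getElem?.comp (fst.comp fst) snd) ?_
    refine option_map (list_getElem?.comp (snd.comp (fst.comp fst)) (snd.comp fst)) ?_
    exact Primrec.pair (snd.comp fst) snd
  refine h.of_eq fun t => ?_
  obtain ⟨x, y⟩ := t
  change _ = x.zip y
  induction x generalizing y with
  | nil => rfl
  | cons a x ih =>
    cases y with
    | nil => simp
    | cons b y =>
      rw [List.zip_cons_cons, ← ih y]
      simp [List.range_succ_eq_map, List.filterMap_map]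

theorem primrec_swap : Primrec fun Q : List (V × V) => Q.map Prod.swap :=
  list_map .id (Primrec.pair (snd.comp snd) (fst.comp snd))

theorem primrecRel_mem {α : Type*} [Primcodable α] : PrimrecRel fun (a : α) (L : List α) => a ∈ L :=
  ((PrimrecRel.exists_mem_list (Primrec.eq (α := α))).comp snd fst).of_eq fun _ => by simp

theorem primrecPred_inconsistent : PrimrecPred fun L : List (List V × List V × ℚ) =>
    Inconsistent {a | a ∈ L} := by
  have hd : PrimrecPred fun e : V × V => e.1 = e.2 := Primrec.eq.comp fst snd
  exact (PrimrecPred.and (primrecRel_rat_lt.comp (snd.comp snd) (.const 1))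
    (hd.forall_mem_list.comp (primrec_zip.comp fst (fst.comp snd)))).exists_mem_list

theorem primrecPred_wellFormed : PrimrecPred fun a : List V × List V × ℚ =>
    a.1.length = a.2.1.length ∧ 0 ≤ a.2.2 ∧ a.2.2 ≤ 1 :=
  (Primrec.eq.comp (list_length.comp fst) (list_length.comp (fst.comp snd))).and
    ((primrecRel_rat_le.comp (.const 0) (snd.comp snd)).and
      (primrecRel_rat_le.comp (snd.comp snd) (.const 1)))

variable [DecidableEq V]

theorem primrec_classOf : Primrec₂ (classOf (V := V)) := by
  refine list_foldl (α := List (V × V) × V) (β := V × V) (σ := V)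
    (h := fun _ t => if t.1 = t.2.1 then t.2.2 else t.1) fst snd ?_
  exact Primrec.ite (Primrec.eq.comp (fst.comp snd) (fst.comp (snd.comp snd)))
    (snd.comp (snd.comp snd)) (fst.comp snd)

theorem primrec_mergeAll : Primrec (mergeAll (V := V)) := by
  have hg : Primrec fun _ : List (V × V) => ([] : List (V × V)) := .const []
  refine list_foldl (h := fun _ t => t.1 ++ [(classOf t.1 t.2.1, classOf t.1 t.2.2)])
    .id hg ?_
  exact list_concat.comp (fst.comp snd) (Primrec.pair
    (primrec_classOf.comp (fst.comp snd) (fst.comp (snd.comp snd)))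
    (primrec_classOf.comp (fst.comp snd) (snd.comp (snd.comp snd))))

theorem primrec_linkEdges : Primrec (linkEdges (V := V)) := by
  have hL : Primrec fun t : List (V × V) × V × V => t.1 := .fst
  suffices hE : Primrec₂ fun (t : List (V × V) × V × V) (f : V × V) =>
      (t.2.2, if f.1 = t.2.1 then f.2 else t.2.2) from
    list_flatMap .id (list_map hL hE)
  exact Primrec.pair (snd.comp (snd.comp fst)) (Primrec.ite
    (Primrec.eq.comp (fst.comp snd) (fst.comp (snd.comp fst)))
    (snd.comp snd) (snd.comp (snd.comp fst)))

theorem primrecRel_linked :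
    PrimrecRel fun (e : V × V) (Q : List (V × V)) => Linked (fun a b => (a, b) ∈ Q) e.1 e.2 := by
  have hm : Primrec fun t : (V × V) × List (V × V) => mergeAll (linkEdges t.2) :=
    primrec_mergeAll.comp (primrec_linkEdges.comp snd)
  exact (Primrec.eq.comp (primrec_classOf.comp hm (fst.comp fst))
    (primrec_classOf.comp hm (snd.comp fst))).of_eq fun t => (linked_iff_classOf _ _ _).symm

theorem primrecRel_follows : PrimrecRel fun S Q : List (V × V) =>
    Follows (fun a b => (a, b) ∈ S) (fun a b => (a, b) ∈ Q) := by
  have hsub := (primrecRel_mem (α := V × V)).forall_mem_list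
  have hlink := (primrecRel_linked (V := V)).forall_mem_list
  have hswap := primrec_swap (V := V)
  refine ((hsub.comp fst snd).or ((hsub.comp fst (hswap.comp snd)).or
    ((hlink.comp fst snd).or (hlink.comp fst (hswap.comp snd))))).of_eq fun t => ?_
  simp [Follows]

theorem primrecRel_exists_follows :
    PrimrecRel fun (L : List (List V × List V × ℚ)) (b : List V × List V × ℚ) =>
      ∃ a ∈ L, a.2.2 ≤ b.2.2 ∧ Follows (ZipRel a.1 a.2.1) (ZipRel b.1 b.2.1) := by
  refine PrimrecRel.exists_mem_list (PrimrecPred.and ?_ ?_)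
  · exact primrecRel_rat_le.comp (snd.comp (snd.comp fst)) (snd.comp (snd.comp snd))
  · exact primrecRel_follows.comp (primrec_zip.comp (fst.comp fst) (fst.comp (snd.comp fst)))
      (primrec_zip.comp (fst.comp snd) (fst.comp (snd.comp snd)))

end Computability

/-- Decidability of the implication problem for approximate
exclusion atoms: over a countable set of variables with decidable equality and
rational approximation degrees, the relation `Σ ⊢ x|_p y` (with `Σ` a finite
set of approximate exclusion atoms, given as a list, and `0 ≤ p < 1/2`) is
decidable (computable). -/
theorem appr_implication_decidable {V : Type} [Primcodable V] [DecidableEq V] :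
    ComputablePred (fun t : List (List V × List V × ℚ) × (List V × List V × ℚ) =>
      (∀ a ∈ t.1, a.1.length = a.2.1.length ∧ 0 ≤ a.2.2 ∧ a.2.2 ≤ 1) ∧
      t.2.1.length = t.2.2.1.length ∧ 0 ≤ t.2.2.2 ∧ t.2.2.2 < 1/2 ∧
      ApprDerivQ {a | a ∈ t.1} t.2.1 t.2.2.1 t.2.2.2) := by
  have hb : Primrec fun t : List (List V × List V × ℚ) × (List V × List V × ℚ) => t.2 := Primrec.snd
  have hlen : PrimrecPred fun t : List (List V × List V × ℚ) × (List V × List V × ℚ) =>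
      t.2.1.length = t.2.2.1.length :=
    Primrec.eq.comp (Primrec.list_length.comp (Primrec.fst.comp hb))
      (Primrec.list_length.comp (Primrec.fst.comp (Primrec.snd.comp hb)))
  have hdeg := Primrec.snd.comp (Primrec.snd.comp hb)
  obtain ⟨hdec, hprim⟩ := (primrecPred_wellFormed.forall_mem_list.comp Primrec.fst).and
    (hlen.and ((primrecRel_rat_le.comp (.const 0) hdeg).and
      ((primrecRel_rat_lt.comp hdeg (.const (1 / 2))).and
        ((primrecPred_inconsistent.comp Primrec.fst).or
          (primrecRel_exists_follows.comp Primrec.fst hb)))))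
  refine ComputablePred.of_eq ⟨hdec, hprim.to_comp⟩ fun t => ?_
  refine and_congr_right fun hΓ => and_congr_right fun hl => and_congr_right fun h0 =>
    and_congr_right fun h1 => ?_
  exact (apprDerivQ_iff hΓ hl h0 (h1.trans (by norm_num))).symm
end
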